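/- arXiv:1212.6451 — 2 statements merged into one kernel-verified Lean document; each statement's English description precedes it below -/
import Mathlib

section
/- Let Ψ be a critical branching mechanism which is regularly varying at 0 with index γ ∈ (1,2]. Let (ν_t)_{t>0} be a family of nonzero finite Borel measures on (0,∞) such that φ(t,q) = ∫_{(0,∞)} (1 − e^{−qx}) ν_t(dx) satisfies ∂_t φ(t,q) = −Ψ(φ(t,q)) for all t > 0 and all q ∈ (0,∞], where φ(t,∞) := ν_t((0,∞)). Suppose there exist functions α, λ : (0,∞) → (0,∞) and a nonzero finite Borel measure ν̂ on (0,∞) such that for every bounded continuous f : (0,∞) → ℝ, α(t) ∫_{(0,∞)} f(λ(t) x) ν_t(dx) → ∫_{(0,∞)} f dν̂ as t → ∞. Then there exist ρ ∈ (0,1] and c > 0 such that for all q > 0, ∫_{(0,∞)} (1 − e^{−qx}) ν̂(dx) = ν̂((0,∞)) · (1 + c·q^{−ρ(γ−1)})^{−1/(γ−1)}. -/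
open MeasureTheory Set Filter

noncomputable section

/-- If `F' → L` then `F(t)/t → L`. -/
lemma aux_div_tendsto (F F' : ℝ → ℝ) (L : ℝ)
    (hF : ∀ t, 0 < t → HasDerivAt F (F' t) t) (hL : Tendsto F' atTop (nhds L)) :
    Tendsto (fun t => F t / t) atTop (nhds L) := by
  rw [Metric.tendsto_atTop]
  intro ε hε
  obtain ⟨T0, hT0⟩ := (Metric.tendsto_atTop.1 hL) (ε/2) (by positivity)
  set T := max T0 1 with hT
  have hT1 : 1 ≤ T := le_max_right _ _
  set K := |F T - L * T| with hK
  refine ⟨max T (2*K/ε + 1), fun t ht => ?_⟩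
  have htT : T ≤ t := le_trans (le_max_left _ _) ht
  have htK : 2*K/ε + 1 ≤ t := le_trans (le_max_right _ _) ht
  have htp : 0 < t := by linarith
  have key : ‖(F t - L * t) - (F T - L * T)‖ ≤ (ε/2) * ‖t - T‖ := by
    apply Convex.norm_image_sub_le_of_norm_hasDerivWithin_le (f := fun t => F t - L * t)
      (f' := fun t => F' t - L) (s := Ici T) _ _ (convex_Ici T) self_mem_Ici htT
    · intro x hx
      have hx' : T ≤ x := hx
      have h1 := (hF x (by linarith)).sub ((hasDerivAt_id x).const_mul L)
      simp only [mul_one] at h1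
      exact h1.hasDerivWithinAt
    · intro x hx
      have hx' : T ≤ x := hx
      have := hT0 x (le_trans (le_max_left _ _) hx')
      rw [Real.dist_eq] at this
      exact this.le
  rw [Real.norm_eq_abs, Real.norm_eq_abs, abs_of_nonneg (by linarith : 0 ≤ t - T)] at key
  have h2 : |F t - L * t| ≤ ε/2 * (t - T) + K := by
    have := abs_add_le ((F t - L * t) - (F T - L * T)) (F T - L * T)
    simp only [sub_add_cancel] at this
    linarith
  have h3 : 2 * K < ε * t := by
    have : 2*K/ε < t := by linarith
    rw [div_lt_iff₀ hε] at this
    linarith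
  rw [Real.dist_eq]
  have : F t / t - L = (F t - L * t)/t := by field_simp
  rw [this, abs_div, abs_of_pos htp, div_lt_iff₀ htp]
  nlinarith

lemma aux_mult (C lam R : ℝ → ℝ) (hC : AntitoneOn C (Ioi 0)) (hlam : ∀ t, 0 < t → 0 < lam t)
    (hRc : ContinuousOn R (Ioi 0)) (hRa : StrictAntiOn R (Ioi 0)) (hRp : ∀ q, 0 < q → 0 < R q)
    (hT : ∀ q, 0 < q → Tendsto (fun t => C (q * lam t) / t) atTop (nhds (R q))) :
    ∀ p q, 0 < p → 0 < q → R (p * q) * R 1 = R p * R q := by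
  intro p q hp hq
  have h1 := hRp 1 one_pos
  set k := R p / R 1 with hk
  have hkp : 0 < k := div_pos (hRp p hp) h1
  have hkt : Tendsto (fun t : ℝ => k * t) atTop atTop := tendsto_id.const_mul_atTop hkp
  have hT' : ∀ q, 0 < q → Tendsto (fun t => C (q * lam (k * t)) / t) atTop (nhds (k * R q)) := by
    intro q hq
    have := ((hT q hq).comp hkt).const_mul k
    refine this.congr' ?_
    filter_upwards [eventually_gt_atTop 0] with t ht
    simp only [Function.comp]
    field_simp
  have hT1 : Tendsto (fun t => C (lam (k * t)) / t) atTop (nhds (R p)) := by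
    have := hT' 1 one_pos
    simp only [one_mul] at this
    rwa [hk, div_mul_cancel₀ _ h1.ne'] at this
  have hup : ∀ p1, p < p1 → R (p1 * q) ≤ k * R q := by
    intro p1 hp1
    have hp1' : 0 < p1 := hp.trans hp1
    have hlt : R p1 < R p := hRa hp hp1' hp1
    refine le_of_tendsto_of_tendsto (hT (p1 * q) (by positivity)) (hT' q hq) ?_
    filter_upwards [(hT p1 hp1').eventually_lt hT1 hlt, eventually_gt_atTop 0] with t ht ht0
    have hl := hlam t ht0
    have hl' := hlam (k*t) (by positivity)
    have : lam (k * t) < p1 * lam t := by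
      by_contra hcon
      push Not at hcon
      have := hC (show p1 * lam t ∈ Ioi 0 from mul_pos hp1' hl) hl' hcon
      rw [div_lt_div_iff_of_pos_right ht0] at ht
      linarith
    have h5 := hC (show q * lam (k*t) ∈ Ioi 0 from mul_pos hq hl')
      (show p1 * q * lam t ∈ Ioi 0 by simp only [mem_Ioi]; positivity) (by nlinarith)
    gcongr
  have hdn : ∀ p1, 0 < p1 → p1 < p → k * R q ≤ R (p1 * q) := by
    intro p1 hp1' hp1
    have hlt : R p < R p1 := hRa hp1' hp hp1
    refine le_of_tendsto_of_tendsto (hT' q hq) (hT (p1 * q) (by positivity)) ?_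
    filter_upwards [hT1.eventually_lt (hT p1 hp1') hlt, eventually_gt_atTop 0] with t ht ht0
    have hl := hlam t ht0
    have hl' := hlam (k*t) (by positivity)
    have : p1 * lam t < lam (k * t) := by
      by_contra hcon
      push Not at hcon
      have := hC hl' (show p1 * lam t ∈ Ioi 0 from mul_pos hp1' hl) hcon
      rw [div_lt_div_iff_of_pos_right ht0] at ht
      linarith
    have h5 := hC (show p1 * q * lam t ∈ Ioi 0 by simp only [mem_Ioi]; positivity)
      (show q * lam (k*t) ∈ Ioi 0 from mul_pos hq hl') (by nlinarith)
    gcongr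
  have hcont : ContinuousAt (fun x => R (x * q)) p := by
    have hc : ContinuousAt R (p * q) := hRc.continuousAt (Ioi_mem_nhds (by positivity))
    exact ContinuousAt.comp (f := fun x => x * q) hc (by fun_prop)
  have hA : R (p * q) ≤ k * R q := by
    refine le_of_tendsto (hcont.tendsto.mono_left (nhdsWithin_le_nhds (s := Ioi p))) ?_
    filter_upwards [self_mem_nhdsWithin] with x hx using hup x hx
  have hB : k * R q ≤ R (p * q) := by
    refine ge_of_tendsto (hcont.tendsto.mono_left (nhdsWithin_le_nhds (s := Iio p))) ?_
    filter_upwards [self_mem_nhdsWithin, mem_nhdsWithin_of_mem_nhds (Ioi_mem_nhds hp)]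
      with x hx hx0 using hdn x hx0 hx
  rw [le_antisymm hA hB, hk]
  field_simp

lemma aux_power (R : ℝ → ℝ)
    (hRc : ContinuousOn R (Ioi 0)) (hRa : StrictAntiOn R (Ioi 0)) (hRp : ∀ q, 0 < q → 0 < R q)
    (hm : ∀ p q, 0 < p → 0 < q → R (p * q) * R 1 = R p * R q) :
    ∃ κ : ℝ, 0 < κ ∧ ∀ q, 0 < q → R q = R 1 * q ^ (-κ) := by
  have h1 := hRp 1 one_pos
  have hpos : ∀ x : ℝ, 0 < R (Real.exp x) := fun x => hRp _ (Real.exp_pos x)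
  let f : ℝ →+ ℝ := AddMonoidHom.mk' (fun x => Real.log (R (Real.exp x)) - Real.log (R 1)) (by
    intro x y
    have := congrArg Real.log (hm (Real.exp x) (Real.exp y) (Real.exp_pos x) (Real.exp_pos y))
    rw [← Real.exp_add, Real.log_mul (hpos _).ne' h1.ne',
      Real.log_mul (hpos _).ne' (hpos _).ne'] at this
    linarith)
  have hf : Continuous f := by
    have : Continuous (fun x => Real.log (R (Real.exp x)) - Real.log (R 1)) := by
      refine Continuous.sub (Continuous.log ?_ fun x => (hpos x).ne') continuous_const
      exact hRc.comp_continuous Real.continuous_exp (fun x => Real.exp_pos x)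
    exact this
  have hlin : ∀ x, f x = x * f 1 := by
    intro x
    have := map_real_smul f hf x 1
    simpa using this
  have hf1 : f 1 < 0 := by
    change Real.log (R (Real.exp 1)) - Real.log (R 1) < 0
    have : R (Real.exp 1) < R 1 := hRa (show (1:ℝ) ∈ Ioi 0 from mem_Ioi.2 zero_lt_one)
      (Real.exp_pos 1) (by simp)
    have := Real.log_lt_log (hpos 1) this
    linarith
  refine ⟨-f 1, by linarith, fun q hq => ?_⟩
  have h := hlin (Real.log q)
  change Real.log (R (Real.exp (Real.log q))) - Real.log (R 1) = _ at h
  rw [Real.exp_log hq] at h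
  rw [neg_neg, Real.rpow_def_of_pos hq, ← h, Real.exp_sub, Real.exp_log (hRp q hq), Real.exp_log h1]
  field_simp

/-- Laplace exponent facts. -/
lemma aux_integrable (μ : Measure ℝ) [IsFiniteMeasure μ] (hμ : μ (Iic 0) = 0) (q : ℝ) (hq : 0 ≤ q) :
    Integrable (fun x => 1 - Real.exp (-(q * x))) μ := by
  refine Integrable.mono' (integrable_const (1:ℝ)) (by fun_prop) ?_
  have : ∀ᵐ x ∂μ, x ∉ Iic (0:ℝ) := measure_eq_zero_iff_ae_notMem.1 hμ
  filter_upwards [this] with x hx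
  have hx' : 0 < x := by simpa using hx
  have h1 : Real.exp (-(q*x)) ≤ 1 := Real.exp_le_one_iff.2 (by nlinarith)
  rw [Real.norm_eq_abs, abs_of_nonneg (by linarith)]
  linarith [Real.exp_pos (-(q*x))]

lemma aux_strict_int (μ : Measure ℝ) (hμ : μ (Iic 0) = 0) (hnz : μ ≠ 0) (f g : ℝ → ℝ)
    (hf : Integrable f μ) (hg : Integrable g μ) (h : ∀ x, 0 < x → f x < g x) :
    ∫ x, f x ∂μ < ∫ x, g x ∂μ := by
  have hae : ∀ᵐ x ∂μ, 0 < x := by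
    filter_upwards [measure_eq_zero_iff_ae_notMem.1 hμ] with x hx
    simpa using hx
  have : 0 < ∫ x, (g x - f x) ∂μ := by
    rw [integral_pos_iff_support_of_nonneg_ae]
    · rw [pos_iff_ne_zero]
      intro h0
      have h2 := measure_eq_zero_iff_ae_notMem.1 h0
      have : ∀ᵐ x ∂μ, False := by
        filter_upwards [h2, hae] with x hx hx0
        have := h x hx0
        simp at hx
        linarith
      exact hnz (by simpa using this)
    · filter_upwards [hae] with x hx
      have := h x hx
      simp; linarith
    · exact hg.sub hf
  rw [integral_sub hg hf] at this
  linarith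

lemma aux_lap_strictMono (μ : Measure ℝ) [IsFiniteMeasure μ] (hμ : μ (Iic 0) = 0) (hnz : μ ≠ 0) :
    StrictMonoOn (fun q => ∫ x, (1 - Real.exp (-(q * x))) ∂μ) (Ioi 0) := by
  intro p hp q hq hpq
  refine aux_strict_int μ hμ hnz _ _ (aux_integrable μ hμ p (le_of_lt hp))
    (aux_integrable μ hμ q (le_of_lt hq)) ?_
  intro x hx
  have : Real.exp (-(q*x)) < Real.exp (-(p*x)) := Real.exp_lt_exp.2 (by nlinarith)
  linarith

lemma aux_lap_pos (μ : Measure ℝ) [IsFiniteMeasure μ] (hμ : μ (Iic 0) = 0) (hnz : μ ≠ 0) (q : ℝ)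
    (hq : 0 < q) : 0 < ∫ x, (1 - Real.exp (-(q * x))) ∂μ := by
  have := aux_strict_int μ hμ hnz (fun _ => 0) _ (integrable_zero _ _ _)
    (aux_integrable μ hμ q hq.le) (by
      intro x hx
      have : Real.exp (-(q*x)) < 1 := Real.exp_lt_one_iff.2 (by nlinarith)
      linarith)
  simpa using this

lemma aux_lap_lt (μ : Measure ℝ) [IsFiniteMeasure μ] (hμ : μ (Iic 0) = 0) (hnz : μ ≠ 0) (q : ℝ)
    (hq : 0 < q) : ∫ x, (1 - Real.exp (-(q * x))) ∂μ < (μ univ).toReal := by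
  have := aux_strict_int μ hμ hnz _ (fun _ => (1:ℝ)) (aux_integrable μ hμ q hq.le)
    (integrable_const _) (by
      intro x hx
      linarith [Real.exp_pos (-(q*x))])
  simpa [Measure.real] using this

lemma aux_lap_cont (μ : Measure ℝ) [IsFiniteMeasure μ] (hμ : μ (Iic 0) = 0) :
    ContinuousOn (fun q => ∫ x, (1 - Real.exp (-(q * x))) ∂μ) (Ioi 0) := by
  refine continuousOn_of_dominated (bound := fun _ => (1:ℝ)) ?_ ?_ (integrable_const _) ?_
  · intro q hq
    fun_prop
  · intro q hq
    have hq' : 0 < q := hq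
    filter_upwards [measure_eq_zero_iff_ae_notMem.1 hμ] with x hx
    have hx' : 0 < x := by simpa using hx
    have h1 : Real.exp (-(q*x)) ≤ 1 := Real.exp_le_one_iff.2 (by nlinarith)
    rw [Real.norm_eq_abs, abs_of_nonneg (by linarith)]
    linarith [Real.exp_pos (-(q*x))]
  · filter_upwards with x
    fun_prop

lemma aux_lap_concave (μ : Measure ℝ) [IsFiniteMeasure μ] (hμ : μ (Iic 0) = 0) (q : ℝ)
    (hq : 0 < q) (hq1 : q ≤ 1) :
    q * ∫ x, (1 - Real.exp (-(1 * x))) ∂μ ≤ ∫ x, (1 - Real.exp (-(q * x))) ∂μ := by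
  rw [← integral_const_mul]
  refine integral_mono ((aux_integrable μ hμ 1 zero_le_one).const_mul q)
    (aux_integrable μ hμ q hq.le) ?_
  intro x
  have := convexOn_exp.2 (mem_univ (-x)) (mem_univ 0) hq.le (sub_nonneg.2 hq1) (by ring)
  simp only [smul_eq_mul, mul_zero, add_zero, Real.exp_zero] at this
  rw [show q * -x = -(q*x) by ring] at this
  simp only [one_mul]
  linarith

lemma aux_psi_integrand (u x : ℝ) (hu : 0 < u) (hx : 0 < x) :
    0 ≤ Real.exp (-(u * x)) - 1 + u * x ∧
    Real.exp (-(u * x)) - 1 + u * x ≤ (u + u^2) * min x (x^2) := by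
  have hux : 0 < u * x := mul_pos hu hx
  have h0 : 0 ≤ Real.exp (-(u * x)) - 1 + u * x := by
    have := Real.add_one_le_exp (-(u*x)); linarith
  have h1 : Real.exp (-(u * x)) ≤ 1 := Real.exp_le_one_iff.2 (by linarith)
  have h2 : Real.exp (-(u * x)) - 1 + u * x ≤ (u*x)^2 := by
    have h3 : Real.exp (-(u*x)) * Real.exp (u*x) = 1 := by
      rw [← Real.exp_add]; simp
    have h4 := Real.add_one_le_exp (u*x)
    have h5 : Real.exp (-(u*x)) * (u*x+1) ≤ 1 := by
      calc _ ≤ Real.exp (-(u*x)) * Real.exp (u*x) := by gcongr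
        _ = 1 := h3
    by_contra hcon
    push Not at hcon
    nlinarith [mul_pos hux hux, mul_pos (mul_pos hux hux) hux]
  refine ⟨h0, ?_⟩
  rcases min_choice x (x^2) with h | h <;> rw [h]
  · nlinarith
  · nlinarith [mul_pos hu (mul_pos hx hx)]

lemma aux_psi_integrable (π : Measure ℝ)
    (hπfin : ∫⁻ x in Ioi (0:ℝ), ENNReal.ofReal (min x (x ^ 2)) ∂π < ⊤) (u : ℝ) (hu : 0 < u) :
    Integrable (fun x => Real.exp (-(u * x)) - 1 + u * x) (π.restrict (Ioi 0)) := by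
  have hm : Integrable (fun x : ℝ => min x (x^2)) (π.restrict (Ioi 0)) := by
    refine ⟨by fun_prop, ?_⟩
    rw [hasFiniteIntegral_iff_ofReal]
    · exact hπfin
    · filter_upwards [ae_restrict_mem measurableSet_Ioi] with x hx
      have : (0:ℝ) < x := hx
      simp only [Pi.zero_apply]
      positivity
  refine Integrable.mono' (hm.const_mul (u + u^2)) (by fun_prop) ?_
  filter_upwards [ae_restrict_mem measurableSet_Ioi] with x hx
  obtain ⟨h1, h2⟩ := aux_psi_integrand u x hu hx
  rwa [Real.norm_eq_abs, abs_of_nonneg h1]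

lemma aux_psi (Ψ : ℝ → ℝ) (β : ℝ) (π : Measure ℝ)
    (hβ : 0 ≤ β)
    (hπfin : ∫⁻ x in Ioi (0:ℝ), ENNReal.ofReal (min x (x ^ 2)) ∂π < ⊤)
    (hΨ : ∀ u : ℝ, 0 < u →
      Ψ u = β * u ^ 2 + ∫ x in Ioi (0:ℝ), (Real.exp (-(u * x)) - 1 + u * x) ∂π)
    (h1 : Tendsto (fun t => Ψ (t * 1) / Ψ t) (nhdsWithin 0 (Ioi 0)) (nhds 1)) :
    ContinuousOn Ψ (Ioi 0) ∧ ∀ u, 0 < u → 0 < Ψ u := by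
  have hint := aux_psi_integrable π hπfin
  have hnn : ∀ u, 0 < u → 0 ≤ Ψ u := by
    intro u hu
    rw [hΨ u hu]
    have : 0 ≤ ∫ x in Ioi (0:ℝ), (Real.exp (-(u * x)) - 1 + u * x) ∂π := by
      refine setIntegral_nonneg measurableSet_Ioi fun x hx => (aux_psi_integrand u x hu hx).1
    positivity
  have hmono : ∀ u v, 0 < u → u ≤ v → Ψ u ≤ Ψ v := by
    intro u v hu huv
    have hv : 0 < v := hu.trans_le huv
    rw [hΨ u hu, hΨ v hv]
    have : ∫ x in Ioi (0:ℝ), (Real.exp (-(u * x)) - 1 + u * x) ∂π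
        ≤ ∫ x in Ioi (0:ℝ), (Real.exp (-(v * x)) - 1 + v * x) ∂π := by
      refine setIntegral_mono_on (hint u hu) (hint v hv) measurableSet_Ioi ?_
      intro x hx
      have hx' : 0 < x := hx
      have e1 : Real.exp (-(v*x)) = Real.exp (-(u*x)) * Real.exp (-((v-u)*x)) := by
        rw [← Real.exp_add]; ring_nf
      have e2 := Real.add_one_le_exp (-((v-u)*x))
      have e3 : Real.exp (-(u*x)) ≤ 1 := Real.exp_le_one_iff.2 (by nlinarith)
      have e4 : 0 ≤ (v-u)*x := mul_nonneg (by linarith) hx'.le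
      have e5 := Real.exp_pos (-(u*x))
      rw [e1]
      nlinarith
    gcongr
  constructor
  · have hc : ConvexOn ℝ (Ioi 0) Ψ := by
      refine ⟨convex_Ioi 0, ?_⟩
      intro u hu v hv a b ha hb hab
      have hw : a • u + b • v ∈ Ioi (0:ℝ) := (convex_Ioi 0) hu hv ha hb hab
      rw [hΨ u hu, hΨ v hv, hΨ _ hw]
      have i1 := hint u hu
      have i2 := hint v hv
      have : ∫ x in Ioi (0:ℝ), (Real.exp (-((a • u + b • v) * x)) - 1 + (a • u + b • v) * x) ∂π
        ≤ a * (∫ x in Ioi (0:ℝ), (Real.exp (-(u * x)) - 1 + u * x) ∂π)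
        + b * ∫ x in Ioi (0:ℝ), (Real.exp (-(v * x)) - 1 + v * x) ∂π := by
        rw [← integral_const_mul, ← integral_const_mul, ← integral_add (i1.const_mul a) (i2.const_mul b)]
        refine setIntegral_mono_on (hint _ hw) ((i1.const_mul a).add (i2.const_mul b))
          measurableSet_Ioi ?_
        intro x hx
        have := convexOn_exp.2 (mem_univ (-(u*x))) (mem_univ (-(v*x))) ha hb hab
        simp only [smul_eq_mul] at this ⊢
        rw [show -((a*u+b*v)*x) = a * -(u*x) + b * -(v*x) by ring]
        have hb' : b = 1 - a := by linarith
        subst hb'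
        linarith
      have hsq : β * (a • u + b • v)^2 ≤ a * (β * u^2) + b * (β * v^2) := by
        have : (a • u + b • v)^2 ≤ a * u^2 + b * v^2 := by
          simp only [smul_eq_mul]
          have hb' : b = 1 - a := by linarith
          subst hb'
          nlinarith [mul_nonneg (mul_nonneg ha hb) (sq_nonneg (u - v))]
        nlinarith
      simp only [smul_eq_mul] at *
      linarith
    exact hc.continuousOn isOpen_Ioi
  · intro u hu
    refine lt_of_le_of_ne (hnn u hu) fun h0 => ?_
    have hz : Tendsto (fun t => Ψ (t * 1) / Ψ t) (nhdsWithin 0 (Ioi 0)) (nhds 0) := by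
      refine tendsto_const_nhds.congr' ?_
      filter_upwards [self_mem_nhdsWithin, mem_nhdsWithin_of_mem_nhds (Iio_mem_nhds hu)] with t ht htu
      have : Ψ t = 0 := le_antisymm (by rw [h0]; exact hmono t u ht (le_of_lt htu)) (hnn t ht)
      simp [this]
    exact zero_ne_one (tendsto_nhds_unique hz h1)

lemma aux_G (Ψ : ℝ → ℝ) (hc : ContinuousOn Ψ (Ioi 0)) (hp : ∀ u, 0 < u → 0 < Ψ u) :
    ∃ G : ℝ → ℝ, (∀ u, 0 < u → HasDerivAt G (-(Ψ u)⁻¹) u) ∧ AntitoneOn G (Ioi 0) := by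
  have hci : ContinuousOn (fun v => -(Ψ v)⁻¹) (Ioi 0) :=
    (hc.inv₀ (fun u hu => (hp u hu).ne')).neg
  have hd : ∀ u, 0 < u → HasDerivAt (fun u => ∫ v in (1:ℝ)..u, -(Ψ v)⁻¹) (-(Ψ u)⁻¹) u := by
    intro u hu
    refine intervalIntegral.integral_hasDerivAt_right ?_ ?_ (hci.continuousAt (Ioi_mem_nhds hu))
    · refine (hci.mono ?_).intervalIntegrable
      intro x hx
      exact lt_of_lt_of_le (lt_min one_pos hu) hx.1
    · exact hci.stronglyMeasurableAtFilter isOpen_Ioi u hu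
  refine ⟨_, hd, ?_⟩
  refine antitoneOn_of_deriv_nonpos (convex_Ioi 0) ?_ ?_ ?_
  · exact fun u hu => (hd u hu).continuousAt.continuousWithinAt
  · rw [interior_Ioi]
    exact fun u hu => (hd u hu).differentiableAt.differentiableWithinAt
  · rw [interior_Ioi]
    intro u hu
    rw [(hd u hu).deriv]
    have := inv_pos.2 (hp u hu)
    linarith

/-- solutions of the ODE -/
lemma aux_ode (Ψ G : ℝ → ℝ) (hp : ∀ u, 0 < u → 0 < Ψ u)
    (hG : ∀ u, 0 < u → HasDerivAt G (-(Ψ u)⁻¹) u) (y : ℝ → ℝ) (hy : ∀ t, 0 < t → 0 < y t)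
    (hode : ∀ t, 0 < t → HasDerivAt y (-Ψ (y t)) t) :
    ∀ t, 0 < t → G (y t) = t + (G (y 1) - 1) := by
  have hd : ∀ t, 0 < t → HasDerivAt (fun t => G (y t) - t) 0 t := by
    intro t ht
    have h := ((hG (y t) (hy t ht)).comp t (hode t ht)).sub (hasDerivAt_id t)
    have e : -(Ψ (y t))⁻¹ * -Ψ (y t) - 1 = 0 := by
      have := (hp _ (hy t ht)).ne'
      field_simp; ring
    rw [e] at h
    exact h
  intro t ht
  have := (convex_Ioi (0:ℝ)).is_const_of_fderivWithin_eq_zero (𝕜 := ℝ) (f := fun t => G (y t) - t)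
    (fun s hs => (hd s hs).differentiableAt.differentiableWithinAt) (by
      intro s hs
      rw [fderivWithin_of_isOpen isOpen_Ioi hs]
      have := (hd s hs).hasFDerivAt.fderiv
      rw [this]; ext; simp) (show t ∈ Ioi 0 from ht) (show (1:ℝ) ∈ Ioi 0 from mem_Ioi.2 zero_lt_one)
  linarith

/-- the regular variation core -/
lemma aux_rv (Ψ G M : ℝ → ℝ) (γ : ℝ) (hp : ∀ u, 0 < u → 0 < Ψ u)
    (hG : ∀ u, 0 < u → HasDerivAt G (-(Ψ u)⁻¹) u) (hGa : AntitoneOn G (Ioi 0))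
    (hreg : ∀ x : ℝ, 0 < x →
      Tendsto (fun t => Ψ (t * x) / Ψ t) (nhdsWithin 0 (Ioi 0)) (nhds (x ^ γ)))
    (hM : ∀ t, 0 < t → 0 < M t)
    (hode : ∀ t, 0 < t → HasDerivAt M (-Ψ (M t)) t)
    (X : ℝ → ℝ) (x : ℝ) (hx : 0 < x) (hX : Tendsto X atTop (nhds x)) :
    Tendsto (fun t => G (X t * M t) / t) atTop (nhds (x ^ (1 - γ))) := by
  have hGM := aux_ode Ψ G hp hG M hM hode
  have hM0 : Tendsto M atTop (nhdsWithin 0 (Ioi 0)) := by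
    refine tendsto_nhdsWithin_iff.2 ⟨?_, ?_⟩
    · rw [Metric.tendsto_atTop]
      intro δ hδ
      refine ⟨max 1 (G δ - (G (M 1) - 1) + 1), fun t ht => ?_⟩
      have ht1 : 1 ≤ t := le_trans (le_max_left _ _) ht
      have ht2 := le_trans (le_max_right _ _) ht
      have hMt := hM t (by linarith)
      rw [Real.dist_eq, sub_zero, abs_of_pos hMt]
      by_contra hcon
      push Not at hcon
      have := hGa (show δ ∈ Ioi 0 from hδ) hMt hcon
      rw [hGM t (by linarith)] at this
      linarith
    · filter_upwards [eventually_gt_atTop 0] with t ht using hM t ht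
  have hfix : ∀ y, 0 < y → Tendsto (fun t => G (y * M t) / t) atTop (nhds (y ^ (1 - γ))) := by
    intro y hy
    refine aux_div_tendsto _ (fun t => y * (Ψ (M t * y) / Ψ (M t))⁻¹) _ ?_ ?_
    · intro t ht
      have hMt := hM t ht
      have h := (hG (y * M t) (mul_pos hy hMt)).comp t ((hode t ht).const_mul y)
      have e : -(Ψ (y * M t))⁻¹ * (y * -Ψ (M t)) = y * (Ψ (M t * y) / Ψ (M t))⁻¹ := by
        rw [mul_comm (M t) y, inv_div]
        have := (hp _ (mul_pos hy hMt)).ne'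
        field_simp
      rw [e] at h
      exact h
    · have h := (((hreg y hy).comp hM0).inv₀ (Real.rpow_pos_of_pos hy γ).ne').const_mul y
      have e : y * (y ^ γ)⁻¹ = y ^ (1 - γ) := by
        rw [Real.rpow_sub hy, Real.rpow_one, div_eq_mul_inv]
      rw [e] at h
      exact h
  have hcont : ContinuousAt (fun y : ℝ => y ^ (1 - γ)) x :=
    Real.continuousAt_rpow_const x _ (Or.inl hx.ne')
  rw [tendsto_order]
  constructor
  · intro b hb
    have h1 : ∀ᶠ y in nhds x, b < y ^ (1 - γ) := hcont.eventually (lt_mem_nhds hb)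
    obtain ⟨y, hy, hxy⟩ := ((h1.filter_mono (nhdsWithin_le_nhds (s := Ioi x))).and
      self_mem_nhdsWithin).exists
    have hxy' : x < y := hxy
    filter_upwards [(hfix y (hx.trans hxy')).eventually (lt_mem_nhds hy),
      hX.eventually (gt_mem_nhds hxy'), hX.eventually (lt_mem_nhds hx), eventually_gt_atTop 0]
      with t h1 h2 h3 ht
    have hMt := hM t ht
    refine h1.trans_le ?_
    have := hGa (mul_pos h3 hMt : X t * M t ∈ Ioi 0) (mul_pos (hx.trans hxy') hMt : y * M t ∈ Ioi 0)
      (by gcongr)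
    gcongr
  · intro b hb
    have h1 : ∀ᶠ y in nhds x, y ^ (1 - γ) < b := hcont.eventually (gt_mem_nhds hb)
    obtain ⟨y, ⟨hy, hy0⟩, hxy⟩ := (((h1.and (lt_mem_nhds hx)).filter_mono
      (nhdsWithin_le_nhds (s := Iio x))).and self_mem_nhdsWithin).exists
    have hxy' : y < x := hxy
    filter_upwards [(hfix y hy0).eventually (gt_mem_nhds hy),
      hX.eventually (lt_mem_nhds hxy'), hX.eventually (lt_mem_nhds hx), eventually_gt_atTop 0]
      with t h1 h2 h3 ht
    have hMt := hM t ht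
    refine lt_of_le_of_lt ?_ h1
    have := hGa (mul_pos hy0 hMt : y * M t ∈ Ioi 0) (mul_pos h3 hMt : X t * M t ∈ Ioi 0) 
      (by gcongr)
    gcongr

lemma aux_final (γ κ c m : ℝ) (hγ : 1 < γ) (hκ : 0 < κ) (hc : 0 < c) (hm : 0 < m) (x : ℝ → ℝ)
    (hx0 : ∀ q, 0 < q → 0 < x q)
    (hx : ∀ q, 0 < q → (x q) ^ (1 - γ) - 1 = c * q ^ (-κ))
    (hconc : ∀ q, 0 < q → q ≤ 1 → q * x 1 ≤ x q) :
    ∃ ρ : ℝ, 0 < ρ ∧ ρ ≤ 1 ∧ ∃ c : ℝ, 0 < c ∧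
      ∀ q : ℝ, 0 < q → x q * m = m * (1 + c * q ^ (-(ρ * (γ - 1)))) ^ (-(1 / (γ - 1))) := by
  have hg : 0 < γ - 1 := by linarith
  refine ⟨κ / (γ - 1), by positivity, ?_, c, hc, ?_⟩
  · rw [div_le_one hg]
    by_contra hcon
    push Not at hcon
    set K := (x 1) ^ (1 - γ) with hK
    have hle : ∀ q, 0 < q → q ≤ 1 → c ≤ K * q ^ (κ - (γ - 1)) := by
      intro q hq hq1
      have h1 : (x q) ^ (1 - γ) ≤ (q * x 1) ^ (1 - γ) :=
        Real.rpow_le_rpow_of_nonpos (mul_pos hq (hx0 1 one_pos)) (hconc q hq hq1) (by linarith)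
      rw [Real.mul_rpow hq.le (hx0 1 one_pos).le] at h1
      have h2 := hx q hq
      have h3 : c * q ^ (-κ) ≤ q ^ (1 - γ) * K := by linarith
      have h4 : q ^ (κ - (γ - 1)) = q ^ (1 - γ) * q ^ κ := by
        rw [← Real.rpow_add hq]; ring_nf
      have h5 : q ^ (-κ) * q ^ κ = 1 := by
        rw [← Real.rpow_add hq]; simp
      have h6 : 0 < q ^ κ := Real.rpow_pos_of_pos hq κ
      calc c = c * (q ^ (-κ) * q ^ κ) := by rw [h5, mul_one]
        _ = c * q ^ (-κ) * q ^ κ := by ring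
        _ ≤ q ^ (1 - γ) * K * q ^ κ := by gcongr
        _ = _ := by rw [h4]; ring
    have hlim : Tendsto (fun q : ℝ => K * q ^ (κ - (γ - 1))) (nhdsWithin 0 (Ioi 0)) (nhds 0) := by
      have : ContinuousAt (fun q : ℝ => K * q ^ (κ - (γ - 1))) 0 :=
        (Real.continuousAt_rpow_const 0 _ (Or.inr (by linarith))).const_mul K
      have h := this.tendsto
      rw [Real.zero_rpow (by linarith), mul_zero] at h
      exact h.mono_left nhdsWithin_le_nhds
    have : c ≤ 0 := by
      refine ge_of_tendsto hlim ?_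
      filter_upwards [self_mem_nhdsWithin, mem_nhdsWithin_of_mem_nhds (Iio_mem_nhds one_pos)]
        with q hq hq1 using hle q hq (le_of_lt hq1)
    linarith
  · intro q hq
    rw [div_mul_cancel₀ _ hg.ne', ← hx q hq, add_sub_cancel, ← Real.rpow_mul (hx0 q hq).le]
    have : (1 - γ) * -(1 / (γ - 1)) = 1 := by field_simp; ring
    rw [this, Real.rpow_one, mul_comm]

/-- if `Ψ` is a critical branching mechanism, regularly varying at
`0` with index `γ ∈ (1,2]`, and the Laplace exponents of `(ν_t)` solve
`∂_t φ = -Ψ(φ)` (including at `q = ∞`), and the rescaled measures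
`α(t) ν_t(λ(t)⁻¹ dx)` converge weakly to a nonzero finite measure `ν̂`, then
`ν̂` has a generalized Mittag-Leffler Laplace exponent:
`∫ (1-e^{-qx}) ν̂(dx) = ν̂((0,∞)) (1 + c q^{-ρ(γ-1)})^{-1/(γ-1)}` for some
`ρ ∈ (0,1]`, `c > 0`. -/
theorem scaling_limit_is_mittag_leffler
    (Ψ : ℝ → ℝ) (β : ℝ) (π : Measure ℝ)
    (hβ : 0 ≤ β)
    (hπfin : ∫⁻ x in Ioi (0:ℝ), ENNReal.ofReal (min x (x ^ 2)) ∂π < ⊤)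
    (hΨ : ∀ u : ℝ, 0 < u →
      Ψ u = β * u ^ 2 + ∫ x in Ioi (0:ℝ), (Real.exp (-(u * x)) - 1 + u * x) ∂π)
    (γ : ℝ) (hγ : 1 < γ ∧ γ ≤ 2)
    (hreg : ∀ x : ℝ, 0 < x →
      Tendsto (fun t => Ψ (t * x) / Ψ t) (nhdsWithin 0 (Ioi 0)) (nhds (x ^ γ)))
    (ν : ℝ → Measure ℝ)
    (hfin : ∀ t : ℝ, 0 < t → IsFiniteMeasure (ν t))
    (hnz : ∀ t : ℝ, 0 < t → ν t (Ioi 0) ≠ 0)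
    (hconc : ∀ t : ℝ, 0 < t → ν t (Iic 0) = 0)
    (hode : ∀ q : ℝ, 0 < q → ∀ t : ℝ, 0 < t →
      HasDerivAt (fun u => ∫ x in Ioi (0:ℝ), (1 - Real.exp (-(q * x))) ∂(ν u))
        (-Ψ (∫ x in Ioi (0:ℝ), (1 - Real.exp (-(q * x))) ∂(ν t))) t)
    (hodeInf : ∀ t : ℝ, 0 < t →
      HasDerivAt (fun u => ((ν u) (Ioi 0)).toReal) (-Ψ (((ν t) (Ioi 0)).toReal)) t)
    (a lam : ℝ → ℝ) (ha : ∀ t : ℝ, 0 < t → 0 < a t) (hlam : ∀ t : ℝ, 0 < t → 0 < lam t)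
    (νhat : Measure ℝ) (hνhatfin : IsFiniteMeasure νhat)
    (hνhatnz : νhat (Ioi 0) ≠ 0) (hνhatc : νhat (Iic 0) = 0)
    (hlim : ∀ f : ℝ → ℝ, ContinuousOn f (Ioi 0) →
      (∃ M : ℝ, ∀ x ∈ Ioi (0:ℝ), |f x| ≤ M) →
      Tendsto (fun t => a t * ∫ x in Ioi (0:ℝ), f (lam t * x) ∂(ν t)) atTop
        (nhds (∫ x in Ioi (0:ℝ), f x ∂νhat))) :
    ∃ ρ : ℝ, 0 < ρ ∧ ρ ≤ 1 ∧ ∃ c : ℝ, 0 < c ∧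
      ∀ q : ℝ, 0 < q →
        ∫ x in Ioi (0:ℝ), (1 - Real.exp (-(q * x))) ∂νhat
          = (νhat (Ioi 0)).toReal *
              (1 + c * q ^ (-(ρ * (γ - 1)))) ^ (-(1 / (γ - 1))) := by
  have hγ1 : 1 < γ := hγ.1
  obtain ⟨hΨc, hΨp⟩ := aux_psi Ψ β π hβ hπfin hΨ (by simpa using hreg 1 one_pos)
  obtain ⟨G, hG, hGa⟩ := aux_G Ψ hΨc hΨp
  -- restricted measures
  have hres0 : ∀ μ : Measure ℝ, (μ.restrict (Ioi 0)) (Iic 0) = 0 := by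
    intro μ
    rw [Measure.restrict_apply measurableSet_Iic]
    have : Iic (0:ℝ) ∩ Ioi 0 = ∅ := by
      ext x
      simp
    rw [this, measure_empty]
  have hresnz : ∀ μ : Measure ℝ, μ (Ioi 0) ≠ 0 → μ.restrict (Ioi 0) ≠ 0 := by
    intro μ h h'
    exact h (Measure.restrict_eq_zero.1 h')
  have hresu : ∀ μ : Measure ℝ, (μ.restrict (Ioi 0)) univ = μ (Ioi 0) := by
    intro μ; simp
  set φ : ℝ → ℝ → ℝ := fun q u => ∫ x in Ioi (0:ℝ), (1 - Real.exp (-(q * x))) ∂(ν u) with hφ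
  set M : ℝ → ℝ := fun u => ((ν u) (Ioi 0)).toReal with hM
  have hMp : ∀ t, 0 < t → 0 < M t := by
    intro t ht
    have := hfin t ht
    exact ENNReal.toReal_pos (hnz t ht) (measure_ne_top _ _)
  have hφp : ∀ q, 0 < q → ∀ t, 0 < t → 0 < φ q t := by
    intro q hq t ht
    have := hfin t ht
    exact aux_lap_pos _ (hres0 _) (hresnz _ (hnz t ht)) q hq
  set C : ℝ → ℝ := fun q => G (φ q 1) - 1 with hC
  have hCa : AntitoneOn C (Ioi 0) := by
    intro p hp q hq hpq
    have := hfin 1 one_pos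
    have h1 : φ p 1 ≤ φ q 1 :=
      (aux_lap_strictMono _ (hres0 _) (hresnz _ (hnz 1 one_pos))).monotoneOn hp hq hpq
    have := hGa (hφp p hp 1 one_pos) (hφp q hq 1 one_pos) h1
    change G (φ q 1) - 1 ≤ G (φ p 1) - 1
    linarith
  have hGφ : ∀ q, 0 < q → ∀ t, 0 < t → G (φ q t) = t + C q := fun q hq =>
    aux_ode Ψ G hΨp hG (φ q) (hφp q hq) (hode q hq)
  -- limit objects
  set m := (νhat (Ioi 0)).toReal with hm
  have hmp : 0 < m := ENNReal.toReal_pos hνhatnz (measure_ne_top _ _)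
  set φh : ℝ → ℝ := fun q => ∫ x in Ioi (0:ℝ), (1 - Real.exp (-(q * x))) ∂νhat with hφh
  have hφhp : ∀ q, 0 < q → 0 < φh q := fun q hq =>
    aux_lap_pos _ (hres0 _) (hresnz _ hνhatnz) q hq
  have hφhlt : ∀ q, 0 < q → φh q < m := by
    intro q hq
    have := aux_lap_lt _ (hres0 νhat) (hresnz _ hνhatnz) q hq
    rwa [hresu] at this
  have hφhm : StrictMonoOn φh (Ioi 0) := aux_lap_strictMono _ (hres0 _) (hresnz _ hνhatnz)
  have hφhc : ContinuousOn φh (Ioi 0) := aux_lap_cont _ (hres0 _)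
  have hL1 : Tendsto (fun t => a t * M t) atTop (nhds m) := by
    have := hlim (fun _ => 1) continuousOn_const ⟨1, by simp⟩
    simpa [Measure.real] using this
  have hLq : ∀ q, 0 < q → Tendsto (fun t => a t * φ (q * lam t) t) atTop (nhds (φh q)) := by
    intro q hq
    have := hlim (fun x => 1 - Real.exp (-(q * x))) (by fun_prop) ⟨1, by
      intro x hx
      have hx' : 0 < x := hx
      have h1 : Real.exp (-(q*x)) ≤ 1 := Real.exp_le_one_iff.2 (by nlinarith)
      rw [abs_of_nonneg (by linarith)]
      linarith [Real.exp_pos (-(q*x))]⟩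
    simpa only [hφ, mul_assoc] using this
  set X : ℝ → ℝ := fun q => φh q / m with hX
  have hXp : ∀ q, 0 < q → 0 < X q := fun q hq => div_pos (hφhp q hq) hmp
  set R : ℝ → ℝ := fun q => (X q) ^ (1 - γ) - 1 with hR
  have hRp : ∀ q, 0 < q → 0 < R q := by
    intro q hq
    have h1 : X q < 1 := (div_lt_one hmp).2 (hφhlt q hq)
    have := Real.one_lt_rpow_of_pos_of_lt_one_of_neg (hXp q hq) h1 (by linarith : 1 - γ < 0)
    change 0 < (X q) ^ (1 - γ) - 1
    linarith
  have hRa : StrictAntiOn R (Ioi 0) := by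
    intro p hp q hq hpq
    have h1 : X p < X q := by
      have := hφhm hp hq hpq
      change φh p / m < φh q / m
      gcongr
    have := Real.rpow_lt_rpow_of_neg (hXp p hp) h1 (by linarith : 1 - γ < 0)
    change (X q) ^ (1 - γ) - 1 < (X p) ^ (1 - γ) - 1
    linarith
  have hRc : ContinuousOn R (Ioi 0) := by
    refine ContinuousOn.sub ?_ continuousOn_const
    exact (hφhc.div_const m).rpow_const (fun q hq => Or.inl (hXp q hq).ne')
  have hT : ∀ q, 0 < q → Tendsto (fun t => C (q * lam t) / t) atTop (nhds (R q)) := by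
    intro q hq
    have h1 : Tendsto (fun t => φ (q * lam t) t / M t) atTop (nhds (X q)) := by
      refine ((hLq q hq).div hL1 hmp.ne').congr' ?_
      filter_upwards [eventually_gt_atTop 0] with t ht
      simp only [Pi.div_apply]
      exact mul_div_mul_left _ _ (ha t ht).ne'
    have h2 := aux_rv Ψ G M γ hΨp hG hGa hreg hMp hodeInf _ _ (hXp q hq) h1
    refine (h2.sub_const 1).congr' ?_
    filter_upwards [eventually_gt_atTop 0] with t ht
    rw [div_mul_cancel₀ _ (hMp t ht).ne', hGφ _ (mul_pos hq (hlam t ht)) t ht]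
    field_simp
    ring
  obtain ⟨κ, hκ, hpow⟩ := aux_power R hRc hRa hRp (aux_mult C lam R hCa hlam hRc hRa hRp hT)
  obtain ⟨ρ, hρ0, hρ1, c, hc, h⟩ := aux_final γ κ (R 1) m hγ1 hκ (hRp 1 one_pos) hmp X hXp hpow (by
    intro q hq hq1
    have := aux_lap_concave (νhat.restrict (Ioi 0)) (hres0 _) q hq hq1
    have h2 : q * φh 1 ≤ φh q := this
    change q * (φh 1 / m) ≤ φh q / m
    rw [← mul_div_assoc]
    gcongr)
  refine ⟨ρ, hρ0, hρ1, c, hc, fun q hq => ?_⟩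
  have := h q hq
  change φh q / m * m = _ at this
  rw [div_mul_cancel₀ _ hmp.ne'] at this
  exact this
end
end

section
/- Let Ψ be a critical branching mechanism which is regularly varying at 0 with index γ ∈ (1,2]. Let (ν_t)_{t>0} be a family of nonzero finite Borel measures on (0,∞) such that φ(t,q) = ∫_{(0,∞)} (1 − e^{−qx}) ν_t(dx) satisfies ∂_t φ(t,q) = −Ψ(φ(t,q)) for all t > 0 and all q ∈ (0,∞], where φ(t,∞) := ν_t((0,∞)). Suppose there exist functions α, λ : (0,∞) → (0,∞) and a nonzero finite Borel measure ν̂ on (0,∞) such that for every bounded continuous f : (0,∞) → ℝ, α(t) ∫_{(0,∞)} f(λ(t) x) ν_t(dx) → ∫_{(0,∞)} f dν̂ as t → ∞. Then there exists ρ ∈ (0,1] such that for every t > 0 the mass distribution function x ↦ ∫_{(0,x]} y ν_t(dy) is regularly varying at infinity with index 1 − ρ, i.e. equals x^{1−ρ} L(t,x) where x ↦ L(t,x) is slowly varying at infinity. -/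
open MeasureTheory Set Filter

noncomputable section


lemma aux_ker_bound (u x : ℝ) (hu : 0 < u) (hx : 0 < x) :
    0 ≤ Real.exp (-(u * x)) - 1 + u * x ∧ 
    Real.exp (-(u * x)) - 1 + u * x ≤ u * x ∧ 
    Real.exp (-(u * x)) - 1 + u * x ≤ (u * x)^2 := by
  have h0 : 0 < u * x := mul_pos hu hx
  refine ⟨by linarith [Real.add_one_le_exp (-(u*x))], by
    have : Real.exp (-(u*x)) ≤ 1 := Real.exp_le_one_iff.2 (by linarith)
    linarith, ?_⟩
  rcases le_or_gt (u * x) 1 with h | h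
  · have := Real.abs_exp_sub_one_sub_id_le (x := -(u*x)) (by rw [abs_neg, abs_of_pos h0]; exact h)
    have := (abs_le.1 this).2
    nlinarith
  · have : Real.exp (-(u*x)) ≤ 1 := Real.exp_le_one_iff.2 (by linarith)
    nlinarith

lemma aux_ker_bound2 (u x : ℝ) (hu : 0 < u) (hx : 0 < x) :
    Real.exp (-(u * x)) - 1 + u * x ≤ max u (u^2) * min x (x^2) := by
  obtain ⟨_, h1, h2⟩ := aux_ker_bound u x hu hx
  rcases le_total x (x^2) with h | h
  · rw [min_eq_left h]
    exact h1.trans (mul_le_mul_of_nonneg_right (le_max_left _ _) hx.le)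
  · rw [min_eq_right h]
    refine h2.trans ?_
    rw [mul_pow]
    exact mul_le_mul_of_nonneg_right (le_max_right _ _) (by positivity)

lemma aux_min_int (π : Measure ℝ)
    (hπfin : ∫⁻ x in Ioi (0:ℝ), ENNReal.ofReal (min x (x ^ 2)) ∂π < ⊤) :
    IntegrableOn (fun x : ℝ => min x (x^2)) (Ioi 0) π := by
  refine ⟨(by fun_prop : Measurable fun x : ℝ => min x (x^2)).aestronglyMeasurable, ?_⟩
  rw [hasFiniteIntegral_iff_ofReal]
  · exact hπfin
  · filter_upwards [ae_restrict_mem measurableSet_Ioi] with x hx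
    have : (0:ℝ) < x := hx
    show 0 ≤ min x (x^2)
    positivity

lemma aux_ker_int (π : Measure ℝ)
    (hπfin : ∫⁻ x in Ioi (0:ℝ), ENNReal.ofReal (min x (x ^ 2)) ∂π < ⊤) (u : ℝ) (hu : 0 < u) :
    IntegrableOn (fun x : ℝ => Real.exp (-(u * x)) - 1 + u * x) (Ioi 0) π := by
  refine Integrable.mono' ((aux_min_int π hπfin).const_mul (max u (u^2)))
    (by fun_prop : Measurable fun x : ℝ => Real.exp (-(u * x)) - 1 + u * x).aestronglyMeasurable ?_
  filter_upwards [ae_restrict_mem measurableSet_Ioi] with x hx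
  rw [Real.norm_of_nonneg (aux_ker_bound u x hu hx).1]
  exact aux_ker_bound2 u x hu hx

lemma psi_facts (Ψ : ℝ → ℝ) (β : ℝ) (π : Measure ℝ)
    (hβ : 0 ≤ β)
    (hπfin : ∫⁻ x in Ioi (0:ℝ), ENNReal.ofReal (min x (x ^ 2)) ∂π < ⊤)
    (hΨ : ∀ u : ℝ, 0 < u →
      Ψ u = β * u ^ 2 + ∫ x in Ioi (0:ℝ), (Real.exp (-(u * x)) - 1 + u * x) ∂π)
    (γ : ℝ) 
    (hreg : ∀ x : ℝ, 0 < x →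
      Tendsto (fun t => Ψ (t * x) / Ψ t) (nhdsWithin 0 (Ioi 0)) (nhds (x ^ γ))) :
    ContinuousOn Ψ (Ioi 0) ∧ (∀ u, 0 < u → 0 < Ψ u) ∧ 
      ∃ C, 0 < C ∧ ∀ u, 0 < u → u ≤ 1 → Ψ u ≤ C * u := by
  have hnn : ∀ u, 0 < u → 0 ≤ Ψ u := by
    intro u hu
    rw [hΨ u hu]
    have : 0 ≤ ∫ x in Ioi (0:ℝ), (Real.exp (-(u * x)) - 1 + u * x) ∂π :=
      setIntegral_nonneg measurableSet_Ioi fun x hx => (aux_ker_bound u x hu hx).1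
    positivity
  have hmono : ∀ u v, 0 < u → u ≤ v → Ψ u ≤ Ψ v := by
    intro u v hu huv
    have hv : 0 < v := hu.trans_le huv
    rw [hΨ u hu, hΨ v hv]
    refine add_le_add (by gcongr) ?_
    refine setIntegral_mono_on (aux_ker_int π hπfin u hu) (aux_ker_int π hπfin v hv)
      measurableSet_Ioi fun x hx => ?_
    have hx : 0 < x := hx
    have h1 := Real.add_one_le_exp (-(u*x) + v * x)
    have h2 : Real.exp (-(u*x)) = Real.exp (-(v*x)) * Real.exp (-(u*x) + v*x) := by
      rw [← Real.exp_add]; congr 1; ring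
    have h3 : Real.exp (-(u*x)) ≤ 1 := Real.exp_le_one_iff.2 (by nlinarith [mul_pos hu hx])
    have h4 := Real.add_one_le_exp (u*x - v * x)
    have h5 : Real.exp (-(v*x)) = Real.exp (-(u*x)) * Real.exp (u*x - v*x) := by
      rw [← Real.exp_add]; congr 1; ring
    have h6 : 0 ≤ v * x - u * x := by nlinarith
    have h7 := Real.exp_pos (-(u*x))
    nlinarith
  refine ⟨?_, ?_, ?_⟩
  · have : ContinuousOn (fun u => β * u ^ 2 + ∫ x in Ioi (0:ℝ), (Real.exp (-(u * x)) - 1 + u * x) ∂π)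
        (Ioi 0) := by
      refine ContinuousOn.add (by fun_prop) ?_
      intro u0 hu0
      have hu0 : 0 < u0 := hu0
      refine ContinuousAt.continuousWithinAt ?_
      refine continuousAt_of_dominated
        (bound := fun x => max (u0+1) ((u0+1)^2) * min x (x^2)) ?_ ?_ ?_ ?_
      · exact Eventually.of_forall fun u => 
          (by fun_prop : Measurable fun x : ℝ => Real.exp (-(u * x)) - 1 + u * x).aestronglyMeasurable
      · filter_upwards [Ioo_mem_nhds hu0 (lt_add_one u0)] with u hu
        filter_upwards [ae_restrict_mem measurableSet_Ioi] with x hx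
        have hx : 0 < x := hx
        rw [Real.norm_of_nonneg (aux_ker_bound u x hu.1 hx).1]
        refine (aux_ker_bound2 u x hu.1 hx).trans ?_
        have := hu.1
        have := hu.2
        gcongr
      · exact (aux_min_int π hπfin).const_mul _
      · exact Eventually.of_forall fun x => by fun_prop
    exact this.congr fun u hu => hΨ u hu
  · intro u hu
    have h1 := hreg 1 one_pos
    rw [Real.one_rpow] at h1
    have h2 := h1.eventually (lt_mem_nhds (show (0:ℝ) < 1 by norm_num))
    have h3 : ∀ᶠ t in nhdsWithin (0:ℝ) (Ioi 0), t < u :=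
      eventually_nhdsWithin_of_eventually_nhds (gt_mem_nhds hu)
    obtain ⟨t, ht, ht2, ht3⟩ := (h2.and (h3.and self_mem_nhdsWithin)).exists
    have ht3 : 0 < t := ht3
    have : Ψ t ≠ 0 := by
      intro h; rw [h] at ht; simp at ht
    exact (lt_of_le_of_ne (hnn t ht3) this.symm).trans_le (hmono t u ht3 ht2.le)
  · refine ⟨β + (∫ x in Ioi (0:ℝ), min x (x^2) ∂π) + 1, ?_, ?_⟩
    · have : 0 ≤ ∫ x in Ioi (0:ℝ), min x (x^2) ∂π :=
        setIntegral_nonneg measurableSet_Ioi fun x hx => by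
          have : (0:ℝ) < x := hx
          positivity
      positivity
    · intro u hu hu1
      rw [hΨ u hu]
      have h1 : ∫ x in Ioi (0:ℝ), (Real.exp (-(u * x)) - 1 + u * x) ∂π ≤ 
          ∫ x in Ioi (0:ℝ), u * min x (x^2) ∂π := by
        refine setIntegral_mono_on (aux_ker_int π hπfin u hu) ((aux_min_int π hπfin).const_mul _)
          measurableSet_Ioi fun x hx => ?_
        have := aux_ker_bound2 u x hu hx
        rwa [max_eq_left (by nlinarith)] at this
      rw [integral_const_mul] at h1
      have h2 : β * u^2 ≤ β * u := mul_le_mul_of_nonneg_left (by nlinarith) hβ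
      nlinarith


lemma exists_G (Ψ : ℝ → ℝ) (hc : ContinuousOn Ψ (Ioi 0)) (hpos : ∀ u, 0 < u → 0 < Ψ u)
    (C : ℝ) (hC : 0 < C) (hle : ∀ u, 0 < u → u ≤ 1 → Ψ u ≤ C * u)
    (γ : ℝ)
    (hreg : ∀ x : ℝ, 0 < x →
      Tendsto (fun t => Ψ (t * x) / Ψ t) (nhdsWithin 0 (Ioi 0)) (nhds (x ^ γ))) :
    ∃ G : ℝ → ℝ, (∀ y, 0 < y → HasDerivAt G (-(1 / Ψ y)) y) ∧ StrictAntiOn G (Ioi 0) ∧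
      Tendsto G (nhdsWithin 0 (Ioi 0)) atTop ∧
      ∀ c, 0 < c → Tendsto (fun y => G (c * y) / G y) (nhdsWithin 0 (Ioi 0)) 
        (nhds (c ^ (1 - γ))) := by
  have hc' : ContinuousOn (fun u => 1 / Ψ u) (Ioi 0) := 
    continuousOn_const.div hc fun u hu => (hpos u hu).ne'
  have hd : ∀ y, 0 < y → HasDerivAt (fun y => ∫ u in y..(1:ℝ), 1 / Ψ u) (-(1 / Ψ y)) y := by
    intro y hy
    refine intervalIntegral.integral_hasDerivAt_left ?_ ?_ ?_
    · refine (hc'.mono ?_).intervalIntegrable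
      intro z hz
      exact (lt_min hy one_pos).trans_le hz.1
    · exact hc'.stronglyMeasurableAtFilter isOpen_Ioi y hy
    · exact hc'.continuousAt (Ioi_mem_nhds hy)
  set G : ℝ → ℝ := fun y => ∫ u in y..(1:ℝ), 1 / Ψ u with hG
  have hcont : ContinuousOn G (Ioi 0) := fun y hy => (hd y hy).continuousAt.continuousWithinAt
  have hanti : StrictAntiOn G (Ioi 0) := by
    refine strictAntiOn_of_deriv_neg (convex_Ioi 0) hcont ?_
    intro y hy
    rw [interior_Ioi] at hy
    rw [(hd y hy).deriv]
    have := hpos y hy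
    have : 0 < 1 / Ψ y := by positivity
    linarith
  have htop : Tendsto G (nhdsWithin 0 (Ioi 0)) atTop := by
    have h1 : AntitoneOn (fun y => G y + (1 / C) * Real.log y) (Ioc 0 1) := by
      have hder : ∀ y, 0 < y → HasDerivAt (fun y => G y + (1 / C) * Real.log y) 
          (-(1/Ψ y) + (1/C) * y⁻¹) y := fun y hy =>
        (hd y hy).add ((Real.hasDerivAt_log hy.ne').const_mul _)
      refine antitoneOn_of_deriv_nonpos (convex_Ioc 0 1) ?_ ?_ ?_
      · intro y hy
        exact (hder y hy.1).continuousAt.continuousWithinAt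
      · intro y hy
        rw [interior_Ioc] at hy
        exact (hder y hy.1).differentiableAt.differentiableWithinAt
      · intro y hy
        rw [interior_Ioc] at hy
        rw [(hder y hy.1).deriv]
        have h2 := hle y hy.1 hy.2.le
        have h3 := one_div_le_one_div_of_le (hpos y hy.1) h2
        have : (1/C) * y⁻¹ = 1 / (C * y) := by rw [one_div, one_div, mul_inv]
        linarith
    have h2 : ∀ᶠ y in nhdsWithin (0:ℝ) (Ioi 0), -((1/C) * Real.log y) ≤ G y := by
      filter_upwards [Ioc_mem_nhdsGT (show (0:ℝ) < 1 by norm_num)] with y hy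
      have := h1 hy (right_mem_Ioc.2 one_pos) hy.2
      simp [hG] at this
      simp [hG]
      linarith
    refine tendsto_atTop_mono' _ h2 ?_
    rw [tendsto_neg_atTop_iff]
    exact Real.tendsto_log_nhdsGT_zero.const_mul_atBot (by positivity)
  refine ⟨G, hd, hanti, htop, ?_⟩
  intro c hc0
  set l := c ^ (1 - γ) with hl
  -- ratio of derivatives
  have hrat : Tendsto (fun y => c * (Ψ y / Ψ (c * y))) (nhdsWithin 0 (Ioi 0)) (nhds l) := by
    have h1 := ((hreg c hc0).inv₀ (Real.rpow_pos_of_pos hc0 γ).ne').const_mul c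
    have : c * (c ^ γ)⁻¹ = l := by
      rw [hl, Real.rpow_sub hc0, Real.rpow_one]; rfl
    rw [this] at h1
    refine h1.congr fun y => ?_
    rw [inv_div, mul_comm y c]
  rw [Metric.tendsto_nhds]
  intro ε hε
  have h1 : ∀ᶠ y in nhdsWithin (0:ℝ) (Ioi 0), |c * (Ψ y / Ψ (c * y)) - l| < ε / 2 := 
    (Metric.tendsto_nhds.1 hrat) (ε/2) (by positivity)
  obtain ⟨δ, hδ, hδ2⟩ := mem_nhdsGT_iff_exists_Ioc_subset.1 h1
  have hδ : 0 < δ := hδ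
  have key : ∀ s : ℝ, (s = 1 ∨ s = -1) → ∀ y ∈ Ioc 0 δ, 
      s * (G (c * y) - l * G y) - ε/2 * G y ≤ s * (G (c * δ) - l * G δ) - ε/2 * G δ := by
    intro s hs y hy
    have hder : ∀ y, 0 < y → HasDerivAt (fun y => s * (G (c * y) - l * G y) - ε/2 * G y) 
        (s * (-(1/Ψ (c * y)) * (c * 1) - l * (-(1/Ψ y))) - ε/2 * (-(1/Ψ y))) y := by
      intro y hy
      have hA : HasDerivAt (fun y => G (c * y)) (-(1/Ψ (c * y)) * (c * 1)) y :=
        HasDerivAt.comp y (hd (c * y) (by positivity)) ((hasDerivAt_id y).const_mul c)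
      exact ((hA.sub ((hd y hy).const_mul l)).const_mul s).sub ((hd y hy).const_mul _)
    have hm : MonotoneOn (fun y => s * (G (c * y) - l * G y) - ε/2 * G y) (Ioc 0 δ) := by
      refine monotoneOn_of_deriv_nonneg (convex_Ioc 0 δ) ?_ ?_ ?_
      · intro y hy
        exact (hder y hy.1).continuousAt.continuousWithinAt
      · intro y hy
        rw [interior_Ioc] at hy
        exact (hder y hy.1).differentiableAt.differentiableWithinAt
      · intro y hy
        rw [interior_Ioc] at hy
        rw [(hder y hy.1).deriv]
        have h2 : |c * (Ψ y / Ψ (c * y)) - l| < ε / 2 := hδ2 ⟨hy.1, hy.2.le⟩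
        have hp1 := hpos y hy.1
        have hp2 := hpos (c * y) (mul_pos hc0 hy.1)
        have h3 := abs_lt.1 h2
        have h4 : s * (-(1/Ψ (c * y)) * (c * 1) - l * (-(1/Ψ y))) - ε/2 * (-(1/Ψ y))
          = (1 / Ψ y) * (ε/2 - s * (c * (Ψ y / Ψ (c * y)) - l)) := by
          field_simp
          ring
        rw [h4]
        refine mul_nonneg (by positivity) ?_
        rcases hs with rfl | rfl <;> linarith
    exact hm hy (right_mem_Ioc.2 hδ) hy.2
  set K := max ((1:ℝ) * (G (c * δ) - l * G δ) - ε/2 * G δ) ((-1:ℝ) * (G (c * δ) - l * G δ) - ε/2 * G δ)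
    with hK
  filter_upwards [Ioc_mem_nhdsGT hδ, htop.eventually_gt_atTop (2 * K / ε), htop.eventually_gt_atTop 0] 
    with y hy hy1 hy2
  have k1 := (key 1 (Or.inl rfl) y hy).trans (le_max_left _ _ : _ ≤ K)
  have k2 := (key (-1) (Or.inr rfl) y hy).trans (le_max_right _ _ : _ ≤ K)
  rw [div_lt_iff₀ hε] at hy1
  rw [Real.dist_eq]
  have : G (c * y) / G y - l = (G (c * y) - l * G y) / G y := by field_simp
  rw [this, abs_div, abs_of_pos hy2, div_lt_iff₀ hy2, abs_lt]
  constructor <;> linarith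


lemma G_fwd (G : ℝ → ℝ) (γ : ℝ) (hanti : StrictAntiOn G (Ioi 0))
    (htop : Tendsto G (nhdsWithin 0 (Ioi 0)) atTop)
    (hrv : ∀ c, 0 < c → Tendsto (fun y => G (c * y) / G y) (nhdsWithin 0 (Ioi 0)) 
        (nhds (c ^ (1 - γ))))
    {ι : Type*} (l : Filter ι) (y z : ι → ℝ) (hy : Tendsto y l (nhdsWithin 0 (Ioi 0)))
    (hz : ∀ᶠ i in l, 0 < z i) (c : ℝ) (hc : 0 < c) (h : Tendsto (fun i => z i / y i) l (nhds c)) :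
    Tendsto (fun i => G (z i) / G (y i)) l (nhds (c ^ (1 - γ))) := by
  have hcont : ContinuousAt (fun x : ℝ => x ^ (1 - γ)) c := 
    Real.continuousAt_rpow_const c _ (Or.inl hc.ne')
  have hypos : ∀ᶠ i in l, 0 < y i := hy.eventually self_mem_nhdsWithin
  have hGpos : ∀ᶠ i in l, 0 < G (y i) := (htop.comp hy).eventually_gt_atTop 0
  refine tendsto_order.2 ⟨fun b hb => ?_, fun b hb => ?_⟩
  · have h1 : ∀ᶠ x in nhdsWithin c (Ioi c), b < x ^ (1 - γ) :=
      eventually_nhdsWithin_of_eventually_nhds (hcont.eventually (lt_mem_nhds hb))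
    obtain ⟨c2, hc2, hc3⟩ := (h1.and self_mem_nhdsWithin).exists
    have hc3 : c < c2 := hc3
    filter_upwards [hypos, hGpos, hz, h.eventually (gt_mem_nhds hc3), 
      ((hrv c2 (hc.trans hc3)).comp hy).eventually (lt_mem_nhds hc2)] with i h1 h2 h3 h4 h5
    refine lt_of_lt_of_le h5 ?_
    simp only [Function.comp]
    rw [div_lt_iff₀ h1] at h4
    have := hanti (mem_Ioi.2 h3) (mem_Ioi.2 (h3.trans h4)) h4
    gcongr
  · have h1 : ∀ᶠ x in nhdsWithin c (Iio c), x ^ (1 - γ) < b :=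
      eventually_nhdsWithin_of_eventually_nhds (hcont.eventually (gt_mem_nhds hb))
    have h2 : ∀ᶠ x in nhdsWithin c (Iio c), 0 < x :=
      eventually_nhdsWithin_of_eventually_nhds (lt_mem_nhds hc)
    obtain ⟨c2, hc2, hc0, hc3⟩ := (h1.and (h2.and self_mem_nhdsWithin)).exists
    have hc3 : c2 < c := hc3
    filter_upwards [hypos, hGpos, hz, h.eventually (lt_mem_nhds hc3), 
      ((hrv c2 hc0).comp hy).eventually (gt_mem_nhds hc2)] with i h1 h2 h3 h4 h5
    refine lt_of_le_of_lt ?_ h5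
    simp only [Function.comp]
    rw [lt_div_iff₀ h1] at h4
    have := hanti (mem_Ioi.2 (mul_pos hc0 h1)) (mem_Ioi.2 h3) h4
    gcongr

lemma G_bwd (G : ℝ → ℝ) (γ : ℝ) (hγ : 1 < γ) (hanti : StrictAntiOn G (Ioi 0))
    (htop : Tendsto G (nhdsWithin 0 (Ioi 0)) atTop)
    (hrv : ∀ c, 0 < c → Tendsto (fun y => G (c * y) / G y) (nhdsWithin 0 (Ioi 0)) 
        (nhds (c ^ (1 - γ))))
    {ι : Type*} (l : Filter ι) (y z : ι → ℝ) (hy : Tendsto y l (nhdsWithin 0 (Ioi 0)))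
    (hz : ∀ᶠ i in l, 0 < z i) (c : ℝ) (hc : 0 < c) 
    (h : Tendsto (fun i => G (z i) / G (y i)) l (nhds (c ^ (1 - γ)))) :
    Tendsto (fun i => z i / y i) l (nhds c) := by
  have hypos : ∀ᶠ i in l, 0 < y i := hy.eventually self_mem_nhdsWithin
  have hGpos : ∀ᶠ i in l, 0 < G (y i) := (htop.comp hy).eventually_gt_atTop 0
  refine tendsto_order.2 ⟨fun b hb => ?_, fun b hb => ?_⟩
  · rcases le_or_gt b 0 with hb0 | hb0
    · filter_upwards [hypos, hz] with i h1 h2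
      exact hb0.trans_lt (div_pos h2 h1)
    · have h1 : c ^ (1 - γ) < b ^ (1 - γ) := Real.rpow_lt_rpow_of_neg hb0 hb (by linarith)
      filter_upwards [hypos, hGpos, hz, h.eventually_lt ((hrv b hb0).comp hy) h1] with i h1 h2 h3 h4
      simp only [Function.comp] at h4
      rw [div_lt_div_iff_of_pos_right h2] at h4
      rw [lt_div_iff₀ h1]
      exact (hanti.lt_iff_gt (mem_Ioi.2 h3) (mem_Ioi.2 (mul_pos hb0 h1))).1 h4
  · have hb0 : 0 < b := hc.trans hb
    have h1 : b ^ (1 - γ) < c ^ (1 - γ) := Real.rpow_lt_rpow_of_neg hc hb (by linarith)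
    filter_upwards [hypos, hGpos, hz, ((hrv b hb0).comp hy).eventually_lt h h1] with i h1 h2 h3 h4
    simp only [Function.comp] at h4
    rw [div_lt_div_iff_of_pos_right h2] at h4
    rw [div_lt_iff₀ h1]
    exact (hanti.lt_iff_gt (mem_Ioi.2 (mul_pos hb0 h1)) (mem_Ioi.2 h3)).1 h4

lemma mult_power (k : ℝ → ℝ) (hpos : ∀ b, 0 < b → 0 < k b) (hanti : StrictAntiOn k (Ioi 0))
    (hcont : ContinuousOn k (Ioi 0)) (hmul : ∀ a b, 0 < a → 0 < b → k (a * b) = k a * k b) :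
    ∃ κ : ℝ, 0 < κ ∧ ∀ b, 0 < b → k b = b ^ (-κ) := by
  let f : ℝ →+ ℝ := AddMonoidHom.mk' (fun x => Real.log (k (Real.exp x))) (by
    intro x y
    rw [Real.exp_add, hmul _ _ (Real.exp_pos _) (Real.exp_pos _),
      Real.log_mul (hpos _ (Real.exp_pos _)).ne' (hpos _ (Real.exp_pos _)).ne'])
  have hf : Continuous f := by
    show Continuous fun x => Real.log (k (Real.exp x))
    refine Continuous.log ?_ fun x => (hpos _ (Real.exp_pos _)).ne'
    exact hcont.comp_continuous Real.continuous_exp fun x => Real.exp_pos x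
  have hlin : ∀ x, f x = x * f 1 := by
    intro x
    have := (f.toRealLinearMap hf).map_smul x 1
    simpa using this
  have hk1 : k 1 = 1 := by
    have := hmul 1 1 one_pos one_pos
    have h1 := hpos 1 one_pos
    rw [mul_one] at this
    nlinarith
  refine ⟨-f 1, ?_, ?_⟩
  · have h1 : k (Real.exp 1) < k 1 := hanti (mem_Ioi.2 one_pos) (mem_Ioi.2 (Real.exp_pos _))
      (Real.one_lt_exp_iff.2 one_pos)
    have : f 1 < 0 := Real.log_neg (hpos _ (Real.exp_pos _)) (h1.trans_eq hk1)
    linarith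
  · intro b hb
    have h1 : Real.log (k (Real.exp (Real.log b))) = Real.log b * f 1 := hlin (Real.log b)
    rw [Real.exp_log hb] at h1
    rw [Real.rpow_def_of_pos hb, neg_neg, ← h1, Real.exp_log (hpos b hb)]

lemma c_rv (C g lam : ℝ → ℝ) (hC : AntitoneOn C (Ioi 0)) 
    (hCtop : Tendsto C (nhdsWithin 0 (Ioi 0)) atTop)
    (hlam : ∀ t, 0 < t → 0 < lam t)
    (hg : StrictAntiOn g (Ioi 0)) (hgc : ContinuousOn g (Ioi 0)) (hgpos : ∀ q, 0 < q → 0 < g q)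
    (hlim : ∀ q, 0 < q → Tendsto (fun t => C (q * lam t) / t) atTop (nhds (g q))) :
    ∃ κ : ℝ, 0 < κ ∧ ∀ b, 0 < b → Tendsto (fun r => C (b * r) / C r) (nhdsWithin 0 (Ioi 0)) 
      (nhds (b ^ (-κ))) := by
  have hg1 := hgpos 1 one_pos
  set T : ℝ → ℝ := fun r => C r / g 1 with hT
  have hTtop : Tendsto T (nhdsWithin 0 (Ioi 0)) atTop := hCtop.atTop_div_const hg1
  have hTpos : ∀ᶠ r in nhdsWithin (0:ℝ) (Ioi 0), 0 < T r := hTtop.eventually_gt_atTop 0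
  have hCT : ∀ᶠ r in nhdsWithin (0:ℝ) (Ioi 0), C r / T r = g 1 := by
    filter_upwards [hTpos] with r hr
    rw [div_eq_iff hr.ne', hT]; field_simp
  have hlim' : ∀ q, 0 < q → Tendsto (fun r => C (q * lam (T r)) / T r) (nhdsWithin 0 (Ioi 0))
    (nhds (g q)) := fun q hq => (hlim q hq).comp hTtop
  have hup : ∀ q, 1 < q → ∀ᶠ r in nhdsWithin (0:ℝ) (Ioi 0), r < q * lam (T r) := by
    intro q hq
    have h0 : 0 < q := by linarith
    have h1 : g q < g 1 := hg (mem_Ioi.2 one_pos) (mem_Ioi.2 h0) hq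
    filter_upwards [(hlim' q h0).eventually (gt_mem_nhds h1), hCT, hTpos, self_mem_nhdsWithin]
      with r h2 h3 h4 h5
    rw [← h3, div_lt_div_iff_of_pos_right h4] at h2
    by_contra hcon
    push Not at hcon
    exact absurd (hC (mem_Ioi.2 (mul_pos h0 (hlam _ h4))) h5 hcon) (not_le.2 h2)
  have hdn : ∀ q, 0 < q → q < 1 → ∀ᶠ r in nhdsWithin (0:ℝ) (Ioi 0), q * lam (T r) < r := by
    intro q h0 hq
    have h1 : g 1 < g q := hg (mem_Ioi.2 h0) (mem_Ioi.2 one_pos) hq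
    filter_upwards [(hlim' q h0).eventually (lt_mem_nhds h1), hCT, hTpos, self_mem_nhdsWithin]
      with r h2 h3 h4 h5
    rw [← h3, div_lt_div_iff_of_pos_right h4] at h2
    by_contra hcon
    push Not at hcon
    exact absurd (hC h5 (mem_Ioi.2 (mul_pos h0 (hlam _ h4))) hcon) (not_le.2 h2)
  have hmain : ∀ b, 0 < b → Tendsto (fun r => C (b * r) / T r) (nhdsWithin 0 (Ioi 0)) 
      (nhds (g b)) := by
    intro b hb
    have hcont : ContinuousAt (fun x : ℝ => g (b * x)) 1 := by
      have h1 : ContinuousAt g (b * 1) := by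
        rw [mul_one]; exact hgc.continuousAt (Ioi_mem_nhds hb)
      exact ContinuousAt.comp (f := fun x : ℝ => b * x) h1 (by fun_prop)
    have hg' : g b = g (b * 1) := by rw [mul_one]
    refine tendsto_order.2 ⟨fun a ha => ?_, fun a ha => ?_⟩
    · rw [hg'] at ha
      have h1 : ∀ᶠ x in nhdsWithin (1:ℝ) (Ioi 1), a < g (b * x) :=
        eventually_nhdsWithin_of_eventually_nhds (hcont.eventually (lt_mem_nhds ha))
      obtain ⟨q, hq, hq1⟩ := (h1.and self_mem_nhdsWithin).exists
      have hq1 : 1 < q := hq1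
      have hq0 : 0 < q := by linarith
      filter_upwards [hup q hq1, (hlim' (b * q) (by positivity)).eventually (lt_mem_nhds hq), hTpos,
        self_mem_nhdsWithin] with r h2 h3 h4 h5
      refine h3.trans_le ?_
      have h5 : 0 < r := h5
      have h6 := hlam _ h4
      have : C (b * q * lam (T r)) ≤ C (b * r) := hC (mem_Ioi.2 (by positivity)) 
        (mem_Ioi.2 (by positivity)) (by rw [mul_assoc]; gcongr)
      gcongr
    · rw [hg'] at ha
      have h1 : ∀ᶠ x in nhdsWithin (1:ℝ) (Iio 1), g (b * x) < a :=
        eventually_nhdsWithin_of_eventually_nhds (hcont.eventually (gt_mem_nhds ha))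
      have h2 : ∀ᶠ x in nhdsWithin (1:ℝ) (Iio 1), 0 < x :=
        eventually_nhdsWithin_of_eventually_nhds (lt_mem_nhds one_pos)
      obtain ⟨q, hq, hq0, hq1⟩ := (h1.and (h2.and self_mem_nhdsWithin)).exists
      have hq1 : q < 1 := hq1
      filter_upwards [hdn q hq0 hq1, (hlim' (b * q) (by positivity)).eventually (gt_mem_nhds hq), 
        hTpos, self_mem_nhdsWithin] with r h2 h3 h4 h5
      refine lt_of_le_of_lt ?_ h3
      have h5 : 0 < r := h5
      have h6 := hlam _ h4
      have : C (b * r) ≤ C (b * q * lam (T r)) := hC (mem_Ioi.2 (by positivity)) 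
        (mem_Ioi.2 (by positivity)) (by rw [mul_assoc]; gcongr)
      gcongr
  have hk : ∀ b, 0 < b → Tendsto (fun r => C (b * r) / C r) (nhdsWithin 0 (Ioi 0)) 
      (nhds (g b / g 1)) := by
    intro b hb
    refine ((hmain b hb).div_const (g 1)).congr' ?_
    filter_upwards [hTpos] with r hr
    rw [div_div, hT]; field_simp
  have hscale : ∀ b, 0 < b → Tendsto (fun r : ℝ => b * r) (nhdsWithin 0 (Ioi 0)) 
      (nhdsWithin 0 (Ioi 0)) := by
    intro b hb
    refine tendsto_nhdsWithin_iff.2 ⟨?_, ?_⟩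
    · have : Tendsto (fun r : ℝ => b * r) (nhds 0) (nhds (b * 0)) := by
        exact (continuous_const_mul b).tendsto 0
      rw [mul_zero] at this
      exact this.mono_left nhdsWithin_le_nhds
    · filter_upwards [self_mem_nhdsWithin] with r hr
      exact mul_pos hb hr
  obtain ⟨κ, hκ, hkap⟩ := mult_power (fun b => g b / g 1) 
    (fun b hb => div_pos (hgpos b hb) hg1)
    (fun x hx y hy hxy => by
      have := hg hx hy hxy
      show g y / g 1 < g x / g 1
      gcongr) (hgc.div_const _) (by
      intro x y hx hy
      have h1 := hk (x * y) (mul_pos hx hy)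
      have h2 := ((hk x hx).comp (hscale y hy)).mul (hk y hy)
      refine tendsto_nhds_unique (h1.congr' ?_) h2
      filter_upwards [((hCtop.comp (hscale y hy)).eventually_gt_atTop 0)] with r hr
      simp only [Function.comp] at hr ⊢
      rw [mul_assoc]
      field_simp)
  exact ⟨κ, hκ, fun b hb => by rw [← hkap b hb]; exact hk b hb⟩


lemma int_of_cont (Q : Measure ℝ) [IsFiniteMeasure Q] (hQ : ∀ᵐ u ∂Q, u ∈ Icc (0:ℝ) 1)
    (F : ℝ → ℝ) (hF : Continuous F) : Integrable F Q := by
  obtain ⟨M, hM⟩ := isCompact_Icc.exists_bound_of_continuousOn (s := Icc (0:ℝ) 1) hF.continuousOn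
  refine Integrable.of_bound hF.aestronglyMeasurable M ?_
  filter_upwards [hQ] with u hu using hM u hu

lemma weier {ι : Type*} (l : Filter ι) (Q : ι → Measure ℝ) (hQf : ∀ᶠ i in l, IsFiniteMeasure (Q i))
    (hQ : ∀ᶠ i in l, ∀ᵐ u ∂(Q i), u ∈ Icc (0:ℝ) 1) (P : Measure ℝ) [IsFiniteMeasure P]
    (hP : ∀ᵐ u ∂P, u ∈ Icc (0:ℝ) 1)
    (hmom : ∀ k : ℕ, Tendsto (fun i => ∫ u, u ^ k ∂(Q i)) l (nhds (∫ u, u ^ k ∂P)))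
    (F : ℝ → ℝ) (hF : Continuous F) :
    Tendsto (fun i => ∫ u, F u ∂(Q i)) l (nhds (∫ u, F u ∂P)) := by
  have hpoly : ∀ p : Polynomial ℝ, 
      Tendsto (fun i => ∫ u, p.eval u ∂(Q i)) l (nhds (∫ u, p.eval u ∂P)) := by
    intro p
    have h1 : ∀ η : Measure ℝ, IsFiniteMeasure η → (∀ᵐ u ∂η, u ∈ Icc (0:ℝ) 1) →
        ∫ u, p.eval u ∂η = ∑ k ∈ Finset.range (p.natDegree + 1), p.coeff k * ∫ u, u ^ k ∂η := by
      intro η _ hR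
      simp_rw [Polynomial.eval_eq_sum_range]
      rw [integral_finsetSum]
      · simp_rw [integral_const_mul]
      · intro k _
        exact int_of_cont η hR _ (by fun_prop)
    rw [h1 P inferInstance hP]
    refine Tendsto.congr' (f₁ := fun i => ∑ k ∈ Finset.range (p.natDegree + 1), 
      p.coeff k * ∫ u, u ^ k ∂(Q i)) ?_ ?_
    · filter_upwards [hQf, hQ] with i h2 h3
      exact (h1 _ h2 h3).symm
    · exact tendsto_finsetSum _ fun k _ => (hmom k).const_mul _
  have happ : ∀ η : Measure ℝ, IsFiniteMeasure η → (∀ᵐ u ∂η, u ∈ Icc (0:ℝ) 1) → 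
      ∀ p : Polynomial ℝ, ∀ ε : ℝ, (∀ x ∈ Icc (0:ℝ) 1, |p.eval x - F x| < ε) →
      |∫ u, p.eval u ∂η - ∫ u, F u ∂η| ≤ ε * η.real univ := by
    intro η _ hR p ε hp
    rw [← integral_sub (int_of_cont η hR _ (by fun_prop)) (int_of_cont η hR _ hF)]
    rw [← Real.norm_eq_abs]
    refine norm_integral_le_of_norm_le_const ?_
    filter_upwards [hR] with u hu using (hp u hu).le
  have hmass : ∀ᶠ i in l, (Q i).real univ < P.real univ + 1 := by
    have h0 := hmom 0
    simp only [pow_zero, integral_const, smul_eq_mul, mul_one] at h0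
    exact h0.eventually (gt_mem_nhds (by linarith))
  rw [Metric.tendsto_nhds]
  intro ε hε
  set M := P.real univ + 1 with hM
  have hPn : 0 ≤ P.real univ := measureReal_nonneg
  have hMpos : 0 < M := by positivity
  obtain ⟨p, hp⟩ := exists_polynomial_near_of_continuousOn 0 1 F hF.continuousOn (ε / (4 * M))
    (by positivity)
  have hε' : ε / (4 * M) * M = ε / 4 := by field_simp
  filter_upwards [hQf, hQ, hmass, (Metric.tendsto_nhds.1 (hpoly p)) (ε/4) (by positivity)] 
    with i h1 h2 h3 h4
  have h5 := happ _ h1 h2 p _ hp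
  have h6 := happ P inferInstance hP p _ hp
  have h7 : ε / (4 * M) * (Q i).real univ ≤ ε / 4 := by
    rw [← hε']; gcongr
  have h8 : ε / (4 * M) * P.real univ ≤ ε / 4 := by
    rw [← hε']; gcongr; linarith
  rw [Real.dist_eq] at h4 ⊢
  rw [abs_lt] at h4 ⊢
  rw [abs_le] at h5 h6
  constructor <;> linarith

lemma sandwich {ι : Type*} (l : Filter ι) (Q : ι → Measure ℝ) 
    (hQf : ∀ᶠ i in l, IsFiniteMeasure (Q i))
    (hQ : ∀ᶠ i in l, ∀ᵐ u ∂(Q i), u ∈ Icc (0:ℝ) 1) (P : Measure ℝ) [IsFiniteMeasure P]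
    (hP : ∀ᵐ u ∂P, u ∈ Icc (0:ℝ) 1)
    (hmom : ∀ k : ℕ, Tendsto (fun i => ∫ u, u ^ k ∂(Q i)) l (nhds (∫ u, u ^ k ∂P)))
    (c : ℝ) (hc : 0 < c) (hPc : P {c} = 0) :
    Tendsto (fun i => ∫ u in Ici c, u⁻¹ ∂(Q i)) l (nhds (∫ u in Ici c, u⁻¹ ∂P)) := by
  set w : ℝ → ℝ := fun u => (max u c)⁻¹ with hw
  have hwc : Continuous w := by
    refine Continuous.inv₀ (by fun_prop) fun u => (lt_max_of_lt_right hc).ne'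
  have hw0 : ∀ u, 0 < w u := fun u => inv_pos.2 (lt_max_of_lt_right hc)
  have hw1 : ∀ u, w u ≤ c⁻¹ := fun u => inv_anti₀ hc (le_max_right _ _)
  set cl : ℝ → ℝ := fun s => max 0 (min 1 s) with hcl
  have hclc : Continuous cl := by fun_prop
  have hcl0 : ∀ s, 0 ≤ cl s := fun s => le_max_left _ _
  have hcl1 : ∀ s, cl s ≤ 1 := fun s => max_le zero_le_one (min_le_left _ _)
  have hclge : ∀ s, 1 ≤ s → cl s = 1 := fun s hs => by simp [hcl, hs]
  have hclle : ∀ s, s ≤ 0 → cl s = 0 := fun s hs => by 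
    simp only [hcl]; rw [min_eq_right (by linarith), max_eq_left hs]
  set g : ℝ → ℝ := (Ici c).indicator w with hg
  have hgm : Measurable g := hwc.measurable.indicator measurableSet_Ici
  have hgint : ∀ η : Measure ℝ, ∫ u in Ici c, u⁻¹ ∂η = ∫ u, g u ∂η := by
    intro η
    rw [hg, integral_indicator measurableSet_Ici]
    refine setIntegral_congr_fun measurableSet_Ici fun u hu => ?_
    simp only [hw]; rw [max_eq_left hu]
  have hgI : ∀ η : Measure ℝ, IsFiniteMeasure η → Integrable g η := by
    intro η _
    refine Integrable.of_bound hgm.aestronglyMeasurable c⁻¹ (Eventually.of_forall fun u => ?_)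
    rw [hg, Real.norm_eq_abs]
    by_cases hu : u ∈ Ici c
    · rw [indicator_of_mem hu, abs_of_pos (hw0 u)]; exact hw1 u
    · rw [indicator_of_notMem hu, abs_zero]; positivity
  set fm : ℕ → ℝ → ℝ := fun n u => w u * cl (n * (u - c)) with hfm
  set fp : ℕ → ℝ → ℝ := fun n u => w u * cl (1 + n * (u - c)) with hfp
  have hfmc : ∀ n, Continuous (fm n) := fun n => hwc.mul (hclc.comp (by fun_prop))
  have hfpc : ∀ n, Continuous (fp n) := fun n => hwc.mul (hclc.comp (by fun_prop))
  have hle1 : ∀ n u, fm n u ≤ g u := by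
    intro n u
    by_cases hu : u ∈ Ici c
    · rw [hg, indicator_of_mem hu]
      exact mul_le_of_le_one_right (hw0 u).le (hcl1 _)
    · rw [hg, indicator_of_notMem hu]
      simp only [mem_Ici, not_le] at hu
      simp only [hfm]
      rw [hclle _ (mul_nonpos_of_nonneg_of_nonpos (Nat.cast_nonneg n) (by linarith)), mul_zero]
  have hle2 : ∀ n u, g u ≤ fp n u := by
    intro n u
    by_cases hu : u ∈ Ici c
    · rw [hg, indicator_of_mem hu]
      simp only [mem_Ici] at hu
      simp only [hfp]
      rw [hclge _ (by nlinarith [mul_nonneg (Nat.cast_nonneg n : (0:ℝ) ≤ n) (sub_nonneg.2 hu)]), mul_one]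
    · rw [hg, indicator_of_notMem hu]
      exact mul_nonneg (hw0 u).le (hcl0 _)
  have hne : ∀ᵐ u ∂P, u ≠ c := by
    rw [ae_iff]; simpa using hPc
  have hbig : ∀ u, c < u → ∀ᶠ n : ℕ in atTop, 1 ≤ n * (u - c) := by
    intro u hu
    have : Tendsto (fun n : ℕ => (n:ℝ) * (u - c)) atTop atTop :=
      tendsto_natCast_atTop_atTop.atTop_mul_const (sub_pos.2 hu)
    exact this.eventually_ge_atTop 1
  have hbig2 : ∀ u, u < c → ∀ᶠ n : ℕ in atTop, 1 + n * (u - c) ≤ 0 := by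
    intro u hu
    have : Tendsto (fun n : ℕ => (n:ℝ) * (u - c)) atTop atBot :=
      tendsto_natCast_atTop_atTop.atTop_mul_const_of_neg (sub_neg.2 hu)
    filter_upwards [this.eventually_le_atBot (-1)] with n hn
    linarith
  have hbd : ∀ s u, ‖w u * cl s‖ ≤ c⁻¹ := by
    intro s u
    rw [Real.norm_of_nonneg (mul_nonneg (hw0 u).le (hcl0 _))]
    exact (mul_le_of_le_one_right (hw0 u).le (hcl1 _)).trans (hw1 u)
  have hlm : Tendsto (fun n => ∫ u, fm n u ∂P) atTop (nhds (∫ u, g u ∂P)) := by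
    refine tendsto_integral_of_dominated_convergence (fun _ => c⁻¹) 
      (fun n => (hfmc n).aestronglyMeasurable) (integrable_const _) 
      (fun n => Eventually.of_forall fun u => hbd _ _) ?_
    filter_upwards [hne] with u hu
    rcases lt_or_gt_of_ne hu with h | h
    · refine tendsto_const_nhds.congr' (Eventually.of_forall fun n => ?_)
      rw [hg, indicator_of_notMem (by simpa using h)]
      simp only [hfm]
      rw [hclle _ (mul_nonpos_of_nonneg_of_nonpos (Nat.cast_nonneg n) (by linarith)), mul_zero]
    · refine tendsto_const_nhds.congr' ?_
      filter_upwards [hbig u h] with n hn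
      rw [hg, indicator_of_mem (by simpa using h.le)]
      simp only [hfm]
      rw [hclge _ hn, mul_one]
  have hlp : Tendsto (fun n => ∫ u, fp n u ∂P) atTop (nhds (∫ u, g u ∂P)) := by
    refine tendsto_integral_of_dominated_convergence (fun _ => c⁻¹) 
      (fun n => (hfpc n).aestronglyMeasurable) (integrable_const _) 
      (fun n => Eventually.of_forall fun u => hbd _ _) ?_
    filter_upwards [hne] with u hu
    rcases lt_or_gt_of_ne hu with h | h
    · refine tendsto_const_nhds.congr' ?_
      filter_upwards [hbig2 u h] with n hn
      rw [hg, indicator_of_notMem (by simpa using h)]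
      simp only [hfp]
      rw [hclle _ hn, mul_zero]
    · refine tendsto_const_nhds.congr' ?_
      filter_upwards [hbig u h] with n hn
      rw [hg, indicator_of_mem (by simpa using h.le)]
      simp only [hfp]
      rw [hclge _ (by linarith), mul_one]
  simp_rw [hgint]
  refine tendsto_order.2 ⟨fun b hb => ?_, fun b hb => ?_⟩
  · obtain ⟨n, hn⟩ := (hlm.eventually (lt_mem_nhds hb)).exists
    filter_upwards [hQf, hQ, (weier l Q hQf hQ P hP hmom _ (hfmc n)).eventually (lt_mem_nhds hn)] 
      with i h1 h2 h3
    exact h3.trans_le (integral_mono (int_of_cont _ h2 _ (hfmc n)) (hgI _ h1) (hle1 n))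
  · obtain ⟨n, hn⟩ := (hlp.eventually (gt_mem_nhds hb)).exists
    filter_upwards [hQf, hQ, (weier l Q hQf hQ P hP hmom _ (hfpc n)).eventually (gt_mem_nhds hn)] 
      with i h1 h2 h3
    exact (integral_mono (hgI _ h1) (int_of_cont _ h2 _ (hfpc n)) (hle2 n)).trans_lt h3

lemma exists_P (σ : ℝ) (hσ : 0 ≤ σ) : ∃ P : Measure ℝ, IsFiniteMeasure P ∧
    (∀ᵐ u ∂P, u ∈ Icc (0:ℝ) 1) ∧ (∀ k : ℕ, ∫ u, u ^ k ∂P = ((k:ℝ) + 1) ^ (-σ)) ∧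
    P {Real.exp (-1)} = 0 ∧ P (Ici (Real.exp (-1))) ≠ 0 := by
  have he : Real.exp (-1) < 1 := by rw [Real.exp_lt_one_iff]; norm_num
  rcases hσ.eq_or_lt with rfl | hσ
  · refine ⟨Measure.dirac 1, inferInstance, ?_, ?_, ?_, ?_⟩
    · exact (ae_dirac_iff (p := fun u => u ∈ Icc (0:ℝ) 1) measurableSet_Icc).2 (by simp)
    · intro k; simp
    · rw [Measure.dirac_apply' _ (measurableSet_singleton _)]
      simp only [indicator_apply_eq_zero, mem_singleton_iff]
      intro h; linarith
    · rw [Measure.dirac_apply' _ measurableSet_Ici, indicator_of_mem (by simpa using he.le)]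
      simp
  · set Γm := ProbabilityTheory.gammaMeasure σ 1 with hΓm
    have hprob : IsProbabilityMeasure Γm := ProbabilityTheory.isProbabilityMeasure_gammaMeasure hσ one_pos
    have hmeas : Measurable fun z : ℝ => Real.exp (-z) := by fun_prop
    have hpm : Measurable (ProbabilityTheory.gammaPDF σ 1) := 
      (ProbabilityTheory.measurable_gammaPDFReal σ 1).ennreal_ofReal
    refine ⟨Γm.map fun z => Real.exp (-z), Measure.isFiniteMeasure_map _ _, ?_, ?_, ?_, ?_⟩
    · refine (ae_map_iff (p := fun u => u ∈ Icc (0:ℝ) 1) hmeas.aemeasurable measurableSet_Icc).2 ?_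
      rw [hΓm, ProbabilityTheory.gammaMeasure,
        ae_withDensity_iff hpm]
      refine Eventually.of_forall fun x hx => ?_
      have : 0 ≤ x := by
        by_contra h
        exact hx (ProbabilityTheory.gammaPDF_of_neg (not_le.1 h))
      exact ⟨(Real.exp_pos _).le, Real.exp_le_one_iff.2 (by linarith)⟩
    · intro k
      rw [integral_map hmeas.aemeasurable (by fun_prop), hΓm, ProbabilityTheory.gammaMeasure,
        integral_withDensity_eq_integral_toReal_smul hpm 
          (Eventually.of_forall fun x => ENNReal.ofReal_lt_top)]
      have h1 : ∀ x, (ProbabilityTheory.gammaPDF σ 1 x).toReal • Real.exp (-x) ^ k = 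
          (Ici (0:ℝ)).indicator (fun x => (Real.Gamma σ)⁻¹ * (x ^ (σ - 1) * Real.exp (-(((k:ℝ)+1) * x)))) x := by
        intro x
        rw [ProbabilityTheory.gammaPDF, ENNReal.toReal_ofReal 
          (ProbabilityTheory.gammaPDFReal_nonneg hσ one_pos x), ProbabilityTheory.gammaPDFReal]
        by_cases hx : 0 ≤ x
        · rw [if_pos hx, indicator_of_mem (by simpa using hx), ← Real.exp_nat_mul, Real.one_rpow,
            one_mul, smul_eq_mul, mul_assoc, mul_assoc, ← Real.exp_add, one_div]
          ring_nf
        · rw [if_neg hx, indicator_of_notMem (by simpa using hx), zero_smul]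
      simp_rw [h1]
      rw [integral_indicator measurableSet_Ici, integral_Ici_eq_integral_Ioi, integral_const_mul,
        Real.integral_rpow_mul_exp_neg_mul_Ioi hσ (by positivity), mul_comm _ (Real.Gamma σ),
        inv_mul_cancel_left₀ (Real.Gamma_pos_of_pos hσ).ne', Real.rpow_neg (by positivity), 
        one_div, Real.inv_rpow (by positivity)]
    · rw [Measure.map_apply hmeas (measurableSet_singleton _)]
      have : (fun z : ℝ => Real.exp (-z)) ⁻¹' {Real.exp (-1)} = {1} := by
        ext z; simp
      rw [this, hΓm]
      exact withDensity_absolutelyContinuous _ _ (by simp)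
    · rw [Measure.map_apply hmeas measurableSet_Ici]
      have : (fun z : ℝ => Real.exp (-z)) ⁻¹' (Ici (Real.exp (-1))) = Iic 1 := by
        ext z; simp
      rw [this, hΓm, ProbabilityTheory.gammaMeasure, Ne, withDensity_apply_eq_zero hpm]
      intro h0
      have hsub : Ioc (0:ℝ) 1 ⊆ {x | ProbabilityTheory.gammaPDF σ 1 x ≠ 0} ∩ Iic 1 := by
        intro x hx
        refine ⟨?_, hx.2⟩
        have := ProbabilityTheory.gammaPDFReal_pos hσ one_pos hx.1
        simpa [ProbabilityTheory.gammaPDF] using this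
      have := measure_mono_null hsub h0
      simp at this


lemma phi_int (ν : Measure ℝ) [IsFiniteMeasure ν] (q : ℝ) (hq : 0 < q) :
    IntegrableOn (fun x : ℝ => 1 - Real.exp (-(q * x))) (Ioi 0) ν := by
  refine Integrable.of_bound (by fun_prop : Measurable fun x : ℝ => 1 - Real.exp (-(q * x))).aestronglyMeasurable 1 ?_
  filter_upwards [ae_restrict_mem measurableSet_Ioi] with x hx
  have hx : 0 < x := hx
  have h1 : Real.exp (-(q * x)) ≤ 1 := Real.exp_le_one_iff.2 (by nlinarith [mul_pos hq hx])
  have h2 := Real.exp_pos (-(q*x))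
  rw [Real.norm_eq_abs, abs_le]
  constructor <;> linarith

lemma xexp_int (ν : Measure ℝ) [IsFiniteMeasure ν] (q : ℝ) (hq : 0 < q) :
    IntegrableOn (fun x : ℝ => x * Real.exp (-(q * x))) (Ioi 0) ν := by
  refine Integrable.of_bound (by fun_prop : Measurable fun x : ℝ => x * Real.exp (-(q * x))).aestronglyMeasurable (1/q) ?_
  filter_upwards [ae_restrict_mem measurableSet_Ioi] with x hx
  have hx : 0 < x := hx
  rw [Real.norm_of_nonneg (by positivity), le_div_iff₀ hq]
  have h1 := Real.add_one_le_exp (q * x)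
  have h2 : Real.exp (-(q*x)) * Real.exp (q * x) = 1 := by rw [← Real.exp_add]; simp
  have h3 := Real.exp_pos (-(q*x))
  nlinarith

lemma scale_tendsto (b : ℝ) (hb : 0 < b) : Tendsto (fun r : ℝ => b * r) (nhdsWithin 0 (Ioi 0)) 
      (nhdsWithin 0 (Ioi 0)) := by
  refine tendsto_nhdsWithin_iff.2 ⟨?_, ?_⟩
  · have : Tendsto (fun r : ℝ => b * r) (nhds 0) (nhds (b * 0)) := by
      exact (continuous_const_mul b).tendsto 0
    rw [mul_zero] at this
    exact this.mono_left nhdsWithin_le_nhds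
  · filter_upwards [self_mem_nhdsWithin] with r hr
    exact mul_pos hb hr

lemma mono_density (ν : Measure ℝ) [IsFiniteMeasure ν] (φ : ℝ → ℝ)
    (hφ : ∀ q, 0 < q → φ q = ∫ x in Ioi (0:ℝ), (1 - Real.exp (-(q * x))) ∂ν)
    (hpos : ∀ q, 0 < q → 0 < φ q) (ρ : ℝ)
    (hrv : ∀ b, 0 < b → Tendsto (fun q => φ (b * q) / φ q) (nhdsWithin 0 (Ioi 0)) (nhds (b ^ ρ))) :
    Tendsto (fun q => q * (∫ x in Ioi (0:ℝ), x * Real.exp (-(q * x)) ∂ν) / φ q) 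
      (nhdsWithin 0 (Ioi 0)) (nhds ρ) := by
  have key : ∀ d q, 0 < d → 0 < q → 
      φ (d * q) - φ q ≤ (d - 1) * (q * ∫ x in Ioi (0:ℝ), x * Real.exp (-(q * x)) ∂ν) := by
    intro d q hd hq
    rw [hφ _ (mul_pos hd hq), hφ q hq, ← integral_sub (phi_int ν _ (mul_pos hd hq)) (phi_int ν q hq),
      ← mul_assoc, ← integral_const_mul]
    refine setIntegral_mono_on ((phi_int ν _ (mul_pos hd hq)).sub (phi_int ν q hq)) 
      ((xexp_int ν q hq).const_mul _) measurableSet_Ioi fun x hx => ?_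
    have h1 := Real.add_one_le_exp (q * x - d * q * x)
    have h2 : Real.exp (-(d * q * x)) = Real.exp (-(q * x)) * Real.exp (q * x - d * q * x) := by
      rw [← Real.exp_add]; congr 1; ring
    have h3 := Real.exp_pos (-(q*x))
    rw [h2]
    nlinarith
  have hslope : Tendsto (fun d : ℝ => (d ^ ρ - 1) / (d - 1)) (nhdsWithin 1 {1}ᶜ) (nhds ρ) := by
    have h1 : HasDerivAt (fun d : ℝ => d ^ ρ) ρ 1 := by
      have := Real.hasDerivAt_rpow_const (x := 1) (p := ρ) (Or.inl one_ne_zero)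
      simpa using this
    have h2 := hasDerivAt_iff_tendsto_slope.1 h1
    refine h2.congr fun d => ?_
    rw [slope_def_field, Real.one_rpow]
  refine tendsto_order.2 ⟨fun a ha => ?_, fun a ha => ?_⟩
  · have h1 : ∀ᶠ d in nhdsWithin (1:ℝ) (Ioi 1), a < (d ^ ρ - 1) / (d - 1) :=
      (hslope.mono_left (nhdsWithin_mono _ fun x hx => ne_of_gt hx)).eventually (lt_mem_nhds ha)
    obtain ⟨d, hd, hd1⟩ := (h1.and self_mem_nhdsWithin).exists
    have hd1 : 1 < d := hd1
    have hd0 : 0 < d := by linarith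
    have h2 := ((hrv d hd0).sub_const 1).div_const (d - 1)
    filter_upwards [h2.eventually (lt_mem_nhds hd), self_mem_nhdsWithin] with q h3 h4
    refine h3.trans_le ?_
    have h4 : 0 < q := h4
    have h5 := key d q hd0 h4
    have h6 := hpos q h4
    rw [div_le_iff₀ (by linarith), div_sub_one h6.ne', div_mul_eq_mul_div]
    gcongr
    linarith
  · have h1 : ∀ᶠ d in nhdsWithin (1:ℝ) (Iio 1), (d ^ ρ - 1) / (d - 1) < a :=
      (hslope.mono_left (nhdsWithin_mono _ fun x hx => ne_of_lt hx)).eventually (gt_mem_nhds ha)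
    have h0 : ∀ᶠ x in nhdsWithin (1:ℝ) (Iio 1), 0 < x :=
        eventually_nhdsWithin_of_eventually_nhds (lt_mem_nhds one_pos)
    obtain ⟨d, hd, hd0, hd1⟩ := (h1.and (h0.and self_mem_nhdsWithin)).exists
    have hd1 : d < 1 := hd1
    have h2 := ((hrv d hd0).sub_const 1).div_const (d - 1)
    filter_upwards [h2.eventually (gt_mem_nhds hd), self_mem_nhdsWithin] with q h3 h4
    refine lt_of_le_of_lt ?_ h3
    have h4 : 0 < q := h4
    have h5 := key d q hd0 h4
    have h6 := hpos q h4
    rw [le_div_iff_of_neg (by linarith), div_sub_one h6.ne', div_mul_eq_mul_div]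
    gcongr
    linarith

lemma taub (ν : Measure ℝ) [IsFiniteMeasure ν] (φ : ℝ → ℝ)
    (hφ : ∀ q, 0 < q → φ q = ∫ x in Ioi (0:ℝ), (1 - Real.exp (-(q * x))) ∂ν)
    (hpos : ∀ q, 0 < q → 0 < φ q) (ρ : ℝ) (hρ : 0 < ρ) (hρ1 : ρ ≤ 1)
    (hrv : ∀ b, 0 < b → Tendsto (fun q => φ (b * q) / φ q) (nhdsWithin 0 (Ioi 0)) (nhds (b ^ ρ))) :
    ∃ J : ℝ, 0 < J ∧ Tendsto (fun q => q / φ q * ∫ y in Ioc (0:ℝ) (1/q), y ∂ν) 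
      (nhdsWithin 0 (Ioi 0)) (nhds J) := by
  obtain ⟨P, hPf, hP, hPm, hPc, hPn⟩ := exists_P (1 - ρ) (by linarith)
  set c := Real.exp (-1) with hcdef
  have hc : 0 < c := Real.exp_pos _
  set D : ℝ → ℝ := fun q => ∫ x in Ioi (0:ℝ), x * Real.exp (-(q * x)) ∂ν with hD
  set dens : ℝ → ℝ → ℝ := fun q x => q / (ρ * φ q) * (x * Real.exp (-(q * x))) with hdens
  have hdm : ∀ q, Measurable (dens q) := fun q => by simp only [hdens]; fun_prop
  have hem : ∀ q : ℝ, Measurable fun x : ℝ => Real.exp (-(q * x)) := fun q => by fun_prop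
  set Q : ℝ → Measure ℝ := fun q => ((ν.restrict (Ioi 0)).withDensity 
    (fun x => ENNReal.ofReal (dens q x))).map (fun x => Real.exp (-(q * x))) with hQdef
  have hdnn : ∀ q, 0 < q → ∀ x, 0 < x → 0 ≤ dens q x := by
    intro q hq x hx
    have := hpos q hq
    simp only [hdens]; positivity
  have hQf : ∀ᶠ q in nhdsWithin (0:ℝ) (Ioi 0), IsFiniteMeasure (Q q) := by
    filter_upwards [self_mem_nhdsWithin] with q hq
    have hq : 0 < q := hq
    have : IsFiniteMeasure ((ν.restrict (Ioi 0)).withDensity (fun x => ENNReal.ofReal (dens q x))) :=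
      isFiniteMeasure_withDensity_ofReal ((xexp_int ν q hq).const_mul _).hasFiniteIntegral
    exact Measure.isFiniteMeasure_map _ _
  have hQ : ∀ᶠ q in nhdsWithin (0:ℝ) (Ioi 0), ∀ᵐ u ∂(Q q), u ∈ Icc (0:ℝ) 1 := by
    filter_upwards [self_mem_nhdsWithin] with q hq
    have hq : 0 < q := hq
    refine (ae_map_iff (p := fun u => u ∈ Icc (0:ℝ) 1) (hem q).aemeasurable measurableSet_Icc).2 ?_
    refine withDensity_absolutelyContinuous _ _ |>.ae_le ?_
    filter_upwards [ae_restrict_mem measurableSet_Ioi] with x hx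
    have hx : 0 < x := hx
    exact ⟨(Real.exp_pos _).le, Real.exp_le_one_iff.2 (by nlinarith [mul_pos hq hx])⟩
  have hint : ∀ q, 0 < q → ∀ F : ℝ → ℝ, Measurable F → ∫ u, F u ∂(Q q) = 
      ∫ x in Ioi (0:ℝ), dens q x * F (Real.exp (-(q * x))) ∂ν := by
    intro q hq F hF
    rw [hQdef]
    rw [integral_map (hem q).aemeasurable hF.aestronglyMeasurable, 
      integral_withDensity_eq_integral_toReal_smul (hdm q).ennreal_ofReal
        (Eventually.of_forall fun x => ENNReal.ofReal_lt_top)]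
    refine setIntegral_congr_fun measurableSet_Ioi fun x hx => ?_
    simp only [smul_eq_mul]
    rw [ENNReal.toReal_ofReal (hdnn q hq x hx)]
  have hmom : ∀ k : ℕ, Tendsto (fun i => ∫ u, u ^ k ∂(Q i)) (nhdsWithin 0 (Ioi 0)) 
      (nhds (∫ u, u ^ k ∂P)) := by
    intro k
    rw [hPm k]
    have hk : (0:ℝ) < (k:ℝ) + 1 := by positivity
    have h1 := (mono_density ν φ hφ hpos ρ hrv).comp (scale_tendsto _ hk)
    have h2 := (h1.mul (hrv _ hk)).const_mul (((k:ℝ)+1)⁻¹ * ρ⁻¹)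
    have h3 : ((k:ℝ)+1)⁻¹ * ρ⁻¹ * (ρ * ((k:ℝ)+1)^ρ) = ((k:ℝ)+1) ^ (-(1-ρ)) := by
      rw [neg_sub, Real.rpow_sub hk, Real.rpow_one]; field_simp
    rw [h3] at h2
    refine h2.congr' ?_
    filter_upwards [self_mem_nhdsWithin] with q hq
    have hq : 0 < q := hq
    rw [hint q hq _ (by fun_prop)]
    have h4 : ∀ x, dens q x * Real.exp (-(q * x)) ^ k = 
        q / (ρ * φ q) * (x * Real.exp (-(((k:ℝ)+1) * q * x))) := by
      intro x
      simp only [hdens]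
      rw [← Real.exp_nat_mul, mul_assoc, mul_assoc, ← Real.exp_add]
      ring_nf
    simp_rw [h4]
    rw [integral_const_mul]
    have h5 := hpos q hq
    have h6 := hpos _ (mul_pos hk hq)
    simp only [Function.comp]
    field_simp
  have hs := sandwich _ Q hQf hQ P hP hmom c hc hPc
  have hJ : 0 < ∫ u in Ici c, u⁻¹ ∂P := by
    rw [setIntegral_pos_iff_support_of_nonneg_ae]
    · have : Function.support (fun u : ℝ => u⁻¹) ∩ Ici c = Ici c := by
        apply inter_eq_right.2
        intro u hu
        have : 0 < u := hc.trans_le hu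
        simp [this.ne']
      rw [this]
      exact pos_iff_ne_zero.2 hPn
    · filter_upwards [ae_restrict_mem measurableSet_Ici] with u hu
      have : 0 < u := hc.trans_le hu
      show 0 ≤ u⁻¹
      positivity
    · refine Integrable.of_bound (measurable_inv.aestronglyMeasurable) c⁻¹ ?_
      filter_upwards [ae_restrict_mem measurableSet_Ici] with u hu
      have h0 : 0 < u := hc.trans_le hu
      rw [Real.norm_of_nonneg (by positivity)]
      exact inv_anti₀ hc hu
  refine ⟨ρ * ∫ u in Ici c, u⁻¹ ∂P, mul_pos hρ hJ, ?_⟩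
  refine (hs.const_mul ρ).congr' ?_
  filter_upwards [self_mem_nhdsWithin] with q hq
  have hq : 0 < q := hq
  have h5 := hpos q hq
  rw [← integral_indicator measurableSet_Ici, hint q hq _ (measurable_inv.indicator measurableSet_Ici)]
  have h6 : ∀ x ∈ Ioi (0:ℝ), dens q x * (Ici c).indicator (fun u : ℝ => u⁻¹) (Real.exp (-(q * x))) = 
      (Iic (1/q)).indicator (fun x => q / (ρ * φ q) * x) x := by
    intro x hx
    by_cases h : x ≤ 1 / q
    · have h7 : Real.exp (-(q * x)) ∈ Ici c := by
        rw [mem_Ici, hcdef, Real.exp_le_exp]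
        rw [le_div_iff₀ hq] at h
        linarith
      rw [indicator_of_mem h7, indicator_of_mem (by exact h)]
      simp only [hdens]
      have := Real.exp_pos (-(q * x))
      field_simp
    · have h7 : Real.exp (-(q * x)) ∉ Ici c := by
        rw [mem_Ici, hcdef, Real.exp_le_exp]
        rw [le_div_iff₀ hq] at h
        linarith
      rw [indicator_of_notMem h7, indicator_of_notMem (by exact h), mul_zero]
  rw [setIntegral_congr_fun measurableSet_Ioi h6, setIntegral_indicator measurableSet_Iic, 
    Ioi_inter_Iic, integral_const_mul]
  field_simp

lemma final_L (ν : Measure ℝ) [IsFiniteMeasure ν] (φ : ℝ → ℝ)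
    (hφ : ∀ q, 0 < q → φ q = ∫ x in Ioi (0:ℝ), (1 - Real.exp (-(q * x))) ∂ν)
    (hpos : ∀ q, 0 < q → 0 < φ q) (ρ : ℝ) (hρ : 0 < ρ) (hρ1 : ρ ≤ 1)
    (hrv : ∀ b, 0 < b → Tendsto (fun q => φ (b * q) / φ q) (nhdsWithin 0 (Ioi 0)) (nhds (b ^ ρ))) :
    ∃ L : ℝ → ℝ,
        (∀ᶠ x in atTop, 0 < L x) ∧
        (∀ c : ℝ, 0 < c → Tendsto (fun x => L (c * x) / L x) atTop (nhds 1)) ∧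
        (∀ x : ℝ, 0 < x → ∫ y in Ioc (0:ℝ) x, y ∂ν = x ^ (1 - ρ) * L x) := by
  obtain ⟨J, hJ, hJl⟩ := taub ν φ hφ hpos ρ hρ hρ1 hrv
  set U : ℝ → ℝ := fun x => ∫ y in Ioc (0:ℝ) x, y ∂ν with hU
  have hinv : Tendsto (fun x : ℝ => x⁻¹) atTop (nhdsWithin 0 (Ioi 0)) := tendsto_inv_atTop_nhdsGT_zero
  have hV : Tendsto (fun x => U x / (x * φ x⁻¹)) atTop (nhds J) := by
    refine (hJl.comp hinv).congr' ?_
    filter_upwards [eventually_gt_atTop 0] with x hx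
    simp only [Function.comp, hU, one_div, inv_inv]
    have := hpos x⁻¹ (inv_pos.2 hx)
    field_simp
  have hUpos : ∀ᶠ x in atTop, 0 < U x := by
    filter_upwards [hV.eventually (lt_mem_nhds hJ), eventually_gt_atTop 0] with x h1 h2
    have := hpos x⁻¹ (inv_pos.2 h2)
    exact (div_pos_iff_of_pos_right (by positivity)).1 h1
  refine ⟨fun x => U x / x ^ (1 - ρ), ?_, ?_, ?_⟩
  · filter_upwards [hUpos, eventually_gt_atTop 0] with x h1 h2
    have := Real.rpow_pos_of_pos h2 (1 - ρ)
    positivity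
  · intro c hc
    have hcx : Tendsto (fun x : ℝ => c * x) atTop atTop := tendsto_id.const_mul_atTop hc
    have h1 := (hV.comp hcx).div hV hJ.ne'
    have h2 := (hrv c⁻¹ (inv_pos.2 hc)).comp hinv
    have h3 := (h1.mul h2).mul_const (c / c ^ (1 - ρ))
    have h4 : J / J * c⁻¹ ^ ρ * (c / c ^ (1 - ρ)) = 1 := by
      rw [div_self hJ.ne', Real.inv_rpow hc.le, Real.rpow_sub hc, Real.rpow_one]
      have := Real.rpow_pos_of_pos hc ρ
      field_simp
    rw [h4] at h3
    refine h3.congr' ?_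
    filter_upwards [hUpos, eventually_gt_atTop 0] with x h5 h6
    have h7 := hpos x⁻¹ (inv_pos.2 h6)
    have h8 := hpos (c⁻¹ * x⁻¹) (by positivity)
    have h9 : (c * x)⁻¹ = c⁻¹ * x⁻¹ := mul_inv _ _
    simp only [Function.comp, Pi.div_apply]
    rw [h9, Real.mul_rpow hc.le h6.le]
    have := Real.rpow_pos_of_pos h6 (1 - ρ)
    have := Real.rpow_pos_of_pos hc (1 - ρ)
    generalize φ x⁻¹ = A at *
    generalize φ (c⁻¹ * x⁻¹) = B at *
    field_simp
  · intro x hx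
    have := Real.rpow_pos_of_pos hx (1 - ρ)
    simp only [hU]
    field_simp


lemma int_pos_Ioi (ν : Measure ℝ) (hnz : ν (Ioi 0) ≠ 0) (f : ℝ → ℝ) (hf : IntegrableOn f (Ioi 0) ν)
    (hpos : ∀ x, 0 < x → 0 < f x) : 0 < ∫ x in Ioi (0:ℝ), f x ∂ν := by
  rw [setIntegral_pos_iff_support_of_nonneg_ae _ hf]
  · have : Function.support f ∩ Ioi 0 = Ioi 0 := by
      apply inter_eq_right.2
      intro u hu
      exact (hpos u hu).ne'
    rw [this]
    exact pos_iff_ne_zero.2 hnz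
  · filter_upwards [ae_restrict_mem measurableSet_Ioi] with u hu
    exact (hpos u hu).le

lemma phi_pos (ν : Measure ℝ) [IsFiniteMeasure ν] (hnz : ν (Ioi 0) ≠ 0) (q : ℝ) (hq : 0 < q) :
    0 < ∫ x in Ioi (0:ℝ), (1 - Real.exp (-(q * x))) ∂ν := by
  refine int_pos_Ioi ν hnz _ (phi_int ν q hq) fun x hx => ?_
  have : Real.exp (-(q * x)) < 1 := Real.exp_lt_one_iff.2 (by nlinarith [mul_pos hq hx])
  linarith

lemma phi_strictMono (ν : Measure ℝ) [IsFiniteMeasure ν] (hnz : ν (Ioi 0) ≠ 0) :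
    StrictMonoOn (fun q : ℝ => ∫ x in Ioi (0:ℝ), (1 - Real.exp (-(q * x))) ∂ν) (Ioi 0) := by
  intro p hp q hq hpq
  have h := int_pos_Ioi ν hnz _ ((phi_int ν q hq).sub (phi_int ν p hp)) fun x hx => by
    have : Real.exp (-(q * x)) < Real.exp (-(p * x)) := by
      rw [Real.exp_lt_exp]; nlinarith
    simp only [Pi.sub_apply]
    linarith
  simp only [Pi.sub_apply] at h
  rw [integral_sub (phi_int ν q hq) (phi_int ν p hp)] at h
  show _ < _
  linarith

lemma phi_lt_mass (ν : Measure ℝ) [IsFiniteMeasure ν] (hnz : ν (Ioi 0) ≠ 0) (q : ℝ) (hq : 0 < q) :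
    ∫ x in Ioi (0:ℝ), (1 - Real.exp (-(q * x))) ∂ν < (ν (Ioi 0)).toReal := by
  have h := int_pos_Ioi ν hnz _ ((integrable_const (1:ℝ)).sub (phi_int ν q hq)) fun x hx => by
    have := Real.exp_pos (-(q * x))
    simp only [Pi.sub_apply]
    linarith
  simp only [Pi.sub_apply] at h
  rw [integral_sub (integrable_const (1:ℝ)) (phi_int ν q hq)] at h
  simp [measureReal_def] at h
  simpa using h

lemma phi_two (ν : Measure ℝ) [IsFiniteMeasure ν] (q : ℝ) (hq : 0 < q) :
    ∫ x in Ioi (0:ℝ), (1 - Real.exp (-(2 * q * x))) ∂ν ≤ 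
      2 * ∫ x in Ioi (0:ℝ), (1 - Real.exp (-(q * x))) ∂ν := by
  rw [← integral_const_mul]
  refine setIntegral_mono_on (phi_int ν _ (by positivity)) ((phi_int ν q hq).const_mul _) 
    measurableSet_Ioi fun x hx => ?_
  have : Real.exp (-(2 * q * x)) = Real.exp (-(q * x)) ^ 2 := by
    rw [← Real.exp_nat_mul]; congr 1; push_cast; ring
  rw [this]
  nlinarith [sq_nonneg (Real.exp (-(q * x)) - 1)]

lemma phi_tendsto (ν : Measure ℝ) [IsFiniteMeasure ν] (q0 : ℝ) :
    Tendsto (fun q : ℝ => ∫ x in Ioi (0:ℝ), (1 - Real.exp (-(q * x))) ∂ν) (nhdsWithin q0 (Ioi 0))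
      (nhds (∫ x in Ioi (0:ℝ), (1 - Real.exp (-(q0 * x))) ∂ν)) := by
  refine tendsto_integral_filter_of_dominated_convergence (fun _ => (1:ℝ)) ?_ ?_ (integrable_const _) ?_
  · exact Eventually.of_forall fun q => 
      (by fun_prop : Measurable fun x : ℝ => 1 - Real.exp (-(q * x))).aestronglyMeasurable
  · filter_upwards [self_mem_nhdsWithin] with q hq
    have hq : 0 < q := hq
    filter_upwards [ae_restrict_mem measurableSet_Ioi] with x hx
    have hx : 0 < x := hx
    have h1 : Real.exp (-(q * x)) ≤ 1 := Real.exp_le_one_iff.2 (by nlinarith [mul_pos hq hx])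
    have h2 := Real.exp_pos (-(q*x))
    rw [Real.norm_eq_abs, abs_le]
    constructor <;> linarith
  · refine Eventually.of_forall fun x => ?_
    have : Continuous fun q : ℝ => 1 - Real.exp (-(q * x)) := by fun_prop
    exact (this.tendsto q0).mono_left nhdsWithin_le_nhds

lemma G_ode (Ψ G y : ℝ → ℝ) (hpos : ∀ u, 0 < u → 0 < Ψ u)
    (hG : ∀ y, 0 < y → HasDerivAt G (-(1 / Ψ y)) y) (hy : ∀ t, 0 < t → 0 < y t)
    (hode : ∀ t, 0 < t → HasDerivAt y (-Ψ (y t)) t) :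
    ∀ t, 0 < t → G (y t) = t + (G (y 1) - 1) := by
  intro t ht
  have hd : ∀ t, 0 < t → HasDerivAt (fun t => G (y t) - t) 0 t := by
    intro t ht
    have h1 := ((hG (y t) (hy t ht)).comp t (hode t ht)).sub (hasDerivAt_id t)
    have h2 := hpos _ (hy t ht)
    have : -(1 / Ψ (y t)) * -Ψ (y t) - 1 = 0 := by field_simp; norm_num
    rw [this] at h1
    exact h1
  have := isOpen_Ioi.is_const_of_deriv_eq_zero (s := Ioi (0:ℝ)) (f := fun t => G (y t) - t) 
    isPreconnected_Ioi
    (fun s hs => (hd s hs).differentiableAt.differentiableWithinAt) (fun s hs => (hd s hs).deriv)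
    (mem_Ioi.2 ht) (mem_Ioi.2 one_pos)
  linarith


/-- under the scaling-limit hypotheses for a critical branching
mechanism regularly varying at 0 with index `γ ∈ (1,2]`, there exists
`ρ ∈ (0,1]` such that for every `t > 0` the mass distribution function
`x ↦ ∫_{(0,x]} y ν_t(dy)` equals `x^{1-ρ} L(t,x)` with `L(t,·)` slowly
varying at infinity. -/
theorem mass_distribution_regularly_varying
    (Ψ : ℝ → ℝ) (β : ℝ) (π : Measure ℝ)
    (hβ : 0 ≤ β)
    (hπfin : ∫⁻ x in Ioi (0:ℝ), ENNReal.ofReal (min x (x ^ 2)) ∂π < ⊤)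
    (hΨ : ∀ u : ℝ, 0 < u →
      Ψ u = β * u ^ 2 + ∫ x in Ioi (0:ℝ), (Real.exp (-(u * x)) - 1 + u * x) ∂π)
    (γ : ℝ) (hγ : 1 < γ ∧ γ ≤ 2)
    (hreg : ∀ x : ℝ, 0 < x →
      Tendsto (fun t => Ψ (t * x) / Ψ t) (nhdsWithin 0 (Ioi 0)) (nhds (x ^ γ)))
    (ν : ℝ → Measure ℝ)
    (hfin : ∀ t : ℝ, 0 < t → IsFiniteMeasure (ν t))
    (hnz : ∀ t : ℝ, 0 < t → ν t (Ioi 0) ≠ 0)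
    (hconc : ∀ t : ℝ, 0 < t → ν t (Iic 0) = 0)
    (hode : ∀ q : ℝ, 0 < q → ∀ t : ℝ, 0 < t →
      HasDerivAt (fun u => ∫ x in Ioi (0:ℝ), (1 - Real.exp (-(q * x))) ∂(ν u))
        (-Ψ (∫ x in Ioi (0:ℝ), (1 - Real.exp (-(q * x))) ∂(ν t))) t)
    (hodeInf : ∀ t : ℝ, 0 < t →
      HasDerivAt (fun u => ((ν u) (Ioi 0)).toReal) (-Ψ (((ν t) (Ioi 0)).toReal)) t)
    (a lam : ℝ → ℝ) (ha : ∀ t : ℝ, 0 < t → 0 < a t) (hlam : ∀ t : ℝ, 0 < t → 0 < lam t)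
    (νhat : Measure ℝ) (hνhatfin : IsFiniteMeasure νhat)
    (hνhatnz : νhat (Ioi 0) ≠ 0) (hνhatc : νhat (Iic 0) = 0)
    (hlim : ∀ f : ℝ → ℝ, ContinuousOn f (Ioi 0) →
      (∃ M : ℝ, ∀ x ∈ Ioi (0:ℝ), |f x| ≤ M) →
      Tendsto (fun t => a t * ∫ x in Ioi (0:ℝ), f (lam t * x) ∂(ν t)) atTop
        (nhds (∫ x in Ioi (0:ℝ), f x ∂νhat))) :
    ∃ ρ : ℝ, 0 < ρ ∧ ρ ≤ 1 ∧
      ∀ t : ℝ, 0 < t → ∃ L : ℝ → ℝ,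
        (∀ᶠ x in atTop, 0 < L x) ∧
        (∀ c : ℝ, 0 < c → Tendsto (fun x => L (c * x) / L x) atTop (nhds 1)) ∧
        (∀ x : ℝ, 0 < x → ∫ y in Ioc (0:ℝ) x, y ∂(ν t) = x ^ (1 - ρ) * L x) := by

  have hγ1 : 0 < γ - 1 := by linarith [hγ.1]
  obtain ⟨hΨc, hΨpos, C0, hC0, hC0le⟩ := psi_facts Ψ β π hβ hπfin hΨ γ hreg
  obtain ⟨G, hGd, hGanti, hGtop, hGrv⟩ := exists_G Ψ hΨc hΨpos C0 hC0 hC0le γ hreg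
  set φ : ℝ → ℝ → ℝ := fun t q => ∫ x in Ioi (0:ℝ), (1 - Real.exp (-(q * x))) ∂(ν t) with hφ
  set m : ℝ → ℝ := fun t => ((ν t) (Ioi 0)).toReal with hm
  have hφpos : ∀ t, 0 < t → ∀ q, 0 < q → 0 < φ t q := by
    intro t ht q hq
    have := hfin t ht
    exact phi_pos (ν t) (hnz t ht) q hq
  have hmpos : ∀ t, 0 < t → 0 < m t := by
    intro t ht
    have := hfin t ht
    exact ENNReal.toReal_pos (hnz t ht) (measure_ne_top _ _)
  set C : ℝ → ℝ := fun q => G (φ 1 q) - 1 with hC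
  have hGφ : ∀ q, 0 < q → ∀ t, 0 < t → G (φ t q) = t + C q := fun q hq t ht =>
    G_ode Ψ G (fun t => φ t q) hΨpos hGd (fun t ht => hφpos t ht q hq) (hode q hq) t ht
  have hGm : ∀ t, 0 < t → G (m t) = t + (G (m 1) - 1) := fun t ht =>
    G_ode Ψ G m hΨpos hGd hmpos hodeInf t ht
  have hφ0 : ∀ t, 0 < t → Tendsto (φ t) (nhdsWithin 0 (Ioi 0)) (nhdsWithin 0 (Ioi 0)) := by
    intro t ht
    have := hfin t ht
    refine tendsto_nhdsWithin_iff.2 ⟨?_, ?_⟩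
    · have := phi_tendsto (ν t) 0
      simpa using this
    · filter_upwards [self_mem_nhdsWithin] with q hq
      exact hφpos t ht q hq
  have hCanti : AntitoneOn C (Ioi 0) := by
    intro p hp q hq hpq
    have := hfin 1 one_pos
    have h1 : φ 1 p ≤ φ 1 q := (phi_strictMono (ν 1) (hnz 1 one_pos)).monotoneOn hp hq hpq
    have h2 := hGanti.antitoneOn (mem_Ioi.2 (hφpos 1 one_pos p hp)) 
      (mem_Ioi.2 (hφpos 1 one_pos q hq)) h1
    simp only [hC]
    linarith
  have hCtop : Tendsto C (nhdsWithin 0 (Ioi 0)) atTop := 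
    tendsto_atTop_add_const_right _ (-1) (hGtop.comp (hφ0 1 one_pos))
  have hm0 : Tendsto m atTop (nhdsWithin 0 (Ioi 0)) := by
    refine tendsto_nhdsWithin_iff.2 ⟨?_, ?_⟩
    · refine tendsto_order.2 ⟨fun a ha => ?_, fun ε hε => ?_⟩
      · filter_upwards [eventually_gt_atTop 0] with t ht
        exact ha.trans (hmpos t ht)
      · filter_upwards [eventually_gt_atTop 0, eventually_gt_atTop (G ε - (G (m 1) - 1))] with t h1 h2
        have h3 : G ε < G (m t) := by rw [hGm t h1]; linarith
        exact (hGanti.lt_iff_gt (mem_Ioi.2 hε) (mem_Ioi.2 (hmpos t h1))).1 h3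
    · filter_upwards [eventually_gt_atTop 0] with t ht
      exact hmpos t ht
  -- the limit
  set M : ℝ := (νhat (Ioi 0)).toReal with hM
  have hMpos : 0 < M := ENNReal.toReal_pos hνhatnz (measure_ne_top _ _)
  set ψ : ℝ → ℝ := fun q => ∫ x in Ioi (0:ℝ), (1 - Real.exp (-(q * x))) ∂νhat with hψ
  have hψpos : ∀ q, 0 < q → 0 < ψ q := phi_pos νhat hνhatnz
  have hψlt : ∀ q, 0 < q → ψ q < M := phi_lt_mass νhat hνhatnz
  have hψmono : StrictMonoOn ψ (Ioi 0) := phi_strictMono νhat hνhatnz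
  have hψc : ContinuousOn ψ (Ioi 0) := fun q _ => phi_tendsto νhat q
  have hlimM : Tendsto (fun t => a t * m t) atTop (nhds M) := by
    have h := hlim (fun _ => 1) continuousOn_const ⟨1, fun x _ => by simp⟩
    simpa [measureReal_def, hm, hM] using h
  have hlimφ : ∀ q, 0 < q → Tendsto (fun t => a t * φ t (q * lam t)) atTop (nhds (ψ q)) := by
    intro q hq
    have h := hlim (fun x => 1 - Real.exp (-(q * x))) (by fun_prop) ⟨1, fun x hx => by
      have hx : 0 < x := hx
      have h1 : Real.exp (-(q * x)) ≤ 1 := Real.exp_le_one_iff.2 (by nlinarith [mul_pos hq hx])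
      have h2 := Real.exp_pos (-(q*x))
      rw [abs_le]
      constructor <;> linarith⟩
    refine h.congr fun t => ?_
    simp only [hφ, mul_assoc]
  have hratio : ∀ q, 0 < q → Tendsto (fun t => φ t (q * lam t) / m t) atTop (nhds (ψ q / M)) := by
    intro q hq
    refine ((hlimφ q hq).div hlimM hMpos.ne').congr' ?_
    filter_upwards [eventually_gt_atTop 0] with t ht
    simp only [Pi.div_apply]
    rw [mul_div_mul_left _ _ (ha t ht).ne']
  set g : ℝ → ℝ := fun q => (ψ q / M) ^ (1 - γ) - 1 with hg
  have hganti : StrictAntiOn g (Ioi 0) := by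
    intro p hp q hq hpq
    have h1 : ψ p / M < ψ q / M := (div_lt_div_iff_of_pos_right hMpos).2 (hψmono hp hq hpq)
    have h2 := Real.rpow_lt_rpow_of_neg (div_pos (hψpos p hp) hMpos) h1 (by linarith : 1 - γ < 0)
    simp only [hg]
    linarith
  have hgc : ContinuousOn g (Ioi 0) := by
    refine ContinuousOn.sub ?_ continuousOn_const
    exact (hψc.div_const M).rpow_const fun q hq => Or.inl (div_pos (hψpos q hq) hMpos).ne'
  have hgpos : ∀ q, 0 < q → 0 < g q := by
    intro q hq
    have := Real.one_lt_rpow_of_pos_of_lt_one_of_neg (div_pos (hψpos q hq) hMpos) 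
      ((div_lt_one hMpos).2 (hψlt q hq)) (by linarith : 1 - γ < 0)
    simp only [hg]
    linarith
  have hClim : ∀ q, 0 < q → Tendsto (fun t => C (q * lam t) / t) atTop (nhds (g q)) := by
    intro q hq
    have h1 := G_fwd G γ hGanti hGtop hGrv atTop m (fun t => φ t (q * lam t)) hm0 (by
      filter_upwards [eventually_gt_atTop 0] with t ht
      exact hφpos t ht _ (mul_pos hq (hlam t ht))) _ (div_pos (hψpos q hq) hMpos) (hratio q hq)
    have h2 : Tendsto (fun t : ℝ => 1 + (G (m 1) - 1) / t) atTop (nhds (1 + 0)) :=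
      tendsto_const_nhds.add (tendsto_id.const_div_atTop _)
    have h3 := (h1.mul h2).sub_const 1
    rw [add_zero, mul_one] at h3
    refine h3.congr' ?_
    filter_upwards [eventually_gt_atTop 0, (hGtop.comp hm0).eventually_gt_atTop 0] with t ht hGt
    simp only [Function.comp] at hGt
    rw [hGφ _ (mul_pos hq (hlam t ht)) t ht]
    rw [hGm t ht] at hGt ⊢
    generalize G (m 1) - 1 = K at *
    field_simp
    ring
  obtain ⟨κ, hκ, hCrv⟩ := c_rv C g lam hCanti hCtop hlam hganti hgc hgpos hClim
  have hφrv : ∀ t, 0 < t → ∀ b, 0 < b → Tendsto (fun q => φ t (b * q) / φ t q) 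
      (nhdsWithin 0 (Ioi 0)) (nhds (b ^ (κ / (γ - 1)))) := by
    intro t ht b hb
    refine G_bwd G γ hγ.1 hGanti hGtop hGrv _ (φ t) (fun q => φ t (b * q)) (hφ0 t ht) ?_ _ 
      (Real.rpow_pos_of_pos hb _) ?_
    · filter_upwards [self_mem_nhdsWithin] with q hq
      exact hφpos t ht _ (mul_pos hb hq)
    · have h1 : (b ^ (κ / (γ - 1))) ^ (1 - γ) = b ^ (-κ) := by
        rw [← Real.rpow_mul hb.le]
        congr 1
        field_simp
        ring
      rw [h1]
      have h2 : Tendsto (fun q => t / C q) (nhdsWithin 0 (Ioi 0)) (nhds 0) := 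
        hCtop.const_div_atTop t
      have h3 := (h2.add (hCrv b hb)).div (h2.add_const 1) (by norm_num)
      simp only [zero_add, div_one] at h3
      refine h3.congr' ?_
      filter_upwards [self_mem_nhdsWithin, hCtop.eventually_gt_atTop 0] with q hq hCq
      have hq : 0 < q := hq
      simp only [Pi.div_apply]
      rw [hGφ q hq t ht, hGφ _ (mul_pos hb hq) t ht]
      field_simp
  refine ⟨κ / (γ - 1), div_pos hκ hγ1, ?_, ?_⟩
  · have := hfin 1 one_pos
    have h1 : (2:ℝ) ^ (κ / (γ - 1)) ≤ 2 := by
      refine le_of_tendsto (hφrv 1 one_pos 2 two_pos) ?_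
      filter_upwards [self_mem_nhdsWithin] with q hq
      rw [div_le_iff₀ (hφpos 1 one_pos q hq)]
      exact phi_two (ν 1) q hq
    by_contra hcon
    push Not at hcon
    have := Real.rpow_lt_rpow_of_exponent_lt (by norm_num : (1:ℝ) < 2) hcon
    rw [Real.rpow_one] at this
    linarith
  · intro t ht
    have := hfin t ht
    have hle : κ / (γ - 1) ≤ 1 := by
      have := hfin 1 one_pos
      have h1 : (2:ℝ) ^ (κ / (γ - 1)) ≤ 2 := by
        refine le_of_tendsto (hφrv 1 one_pos 2 two_pos) ?_
        filter_upwards [self_mem_nhdsWithin] with q hq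
        rw [div_le_iff₀ (hφpos 1 one_pos q hq)]
        exact phi_two (ν 1) q hq
      by_contra hcon
      push Not at hcon
      have := Real.rpow_lt_rpow_of_exponent_lt (by norm_num : (1:ℝ) < 2) hcon
      rw [Real.rpow_one] at this
      linarith
    exact final_L (ν t) (φ t) (fun q _ => rfl) (hφpos t ht) _ (div_pos hκ hγ1) hle (hφrv t ht)
end
end
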